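/- Assume condition (R), let Ψ_{γ,σ}(x;q) = x^{γ+1} λ_{γ,σ}(x;q), and let ξ_{γ,σ,n}(q) denote the n-th positive zero of Ψ_{γ,σ}'(·;q). Then the Rayleigh sums of the zeros satisfy Σ_{n≥1} ξ_{γ,σ,n}(q)^{−2} = σ²(γ+3)Γ_q(γ+1)/((γ+1)Γ_q(γ+3)) and Σ_{n≥1} ξ_{γ,σ,n}(q)^{−4} = σ⁴(γ+3)²Γ_q(γ+1)²/((γ+1)²Γ_q(γ+3)²) − 2σ⁴q²(γ+5)Γ_q(γ+1)/((γ+1)Γ_q(γ+5)). -/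

import Mathlib

noncomputable def qPochInf (a q : ℝ) : ℝ := ∏' k : ℕ, (1 - a * q ^ k)

noncomputable def qGamma (q x : ℝ) : ℝ :=
  qPochInf q q * (1 - q) ^ (1 - x) / qPochInf (q ^ x) q

noncomputable def qML (γ σ q : ℝ) (z : ℂ) : ℂ :=
  ∑' n : ℕ,
    (((-1) ^ n * σ ^ (2 * n) * q ^ (n * (n - 1)) / qGamma q (2 * n + γ + 1) : ℝ) : ℂ) * z ^ (2 * n)

noncomputable def qMLR (γ σ q : ℝ) (x : ℝ) : ℝ :=
  ∑' n : ℕ,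
    ((-1) ^ n * σ ^ (2 * n) * q ^ (n * (n - 1)) / qGamma q (2 * n + γ + 1)) * x ^ (2 * n)

def condR (q γ : ℝ) : Prop :=
  (γ = 0 ∨ γ = 1) ∨
    (γ ∈ Set.Ioo (0 : ℝ) 2 ∧ γ ≠ 1 ∧
      1 < q⁻¹ * (1 - q) * (1 - q ^ (γ + 1)) * (1 - q ^ (γ + 2)))

noncomputable def radiusStarlike (α : ℝ) (f : ℂ → ℂ) : ℝ :=
  sSup {r : ℝ | 0 < r ∧ ∀ z : ℂ, 0 < ‖z‖ → ‖z‖ < r →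
    α < (z * deriv f z / f z).re}

noncomputable def radiusConvex (α : ℝ) (f : ℂ → ℂ) : ℝ :=
  sSup {r : ℝ | 0 < r ∧ ∀ z : ℂ, ‖z‖ < r →
    α < (1 + z * deriv (deriv f) z / deriv f z).re}

noncomputable def fML (γ σ q : ℝ) (z : ℂ) : ℂ :=
  Complex.exp ((1 / ((γ : ℂ) + 1)) *
    Complex.log (z ^ ((γ : ℂ) + 1) * (qGamma q (γ + 1) : ℂ) * qML γ σ q z))

noncomputable def gML (γ σ q : ℝ) (z : ℂ) : ℂ :=
  z * (qGamma q (γ + 1) : ℂ) * qML γ σ q z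

noncomputable def hML (γ σ q : ℝ) (z : ℂ) : ℂ :=
  z * (qGamma q (γ + 1) : ℂ) *
    ∑' n : ℕ,
      (((-1) ^ n * σ ^ (2 * n) * q ^ (n * (n - 1)) / qGamma q (2 * n + γ + 1) : ℝ) : ℂ) * z ^ n

noncomputable def hMLR (γ σ q : ℝ) (x : ℝ) : ℝ :=
  x * qGamma q (γ + 1) *
    ∑' n : ℕ,
      ((-1) ^ n * σ ^ (2 * n) * q ^ (n * (n - 1)) / qGamma q (2 * n + γ + 1)) * x ^ n

/-!
With `τ = 2 / (γ + 1)`, the derivative of `x ^ (γ + 1) * λ(x)` on `(0, ∞)` is a nonvanishing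
multiple of `x ^ γ * (f + τ w f')`, where `w = x ^ 2` and `λ(x) = f(w)`. So the claim is about the
zeros of the entire function `F = f + τ w f'`. If polynomials with only positive zeros converge to
`F` coefficientwise with a superexponentially decaying bound, then the reciprocals of their zeros
are dominated by a geometric series, and the factorisations and Newton identities of the
polynomials pass to the limit: `F(w) / F(0) = ∏ (1 - u k w)`, where `∑ u k` and `∑ u k ^ 2` are
polynomials in the first two coefficients. Once the zeros of `F` are known to be simple, each of
them is counted once.

For `γ ∈ {0, 1}`, the function `f` is a `q`-analogue of the cosine or the sine. A pair of
`q`-addition formulas produces polynomial approximants which have positive zeros by a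
Hermite–Biehler argument, and their Wronskian is positive, so that the zeros of `f` are simple.
Both facts pass from `f` to `F`, the second one through a limiting form of Laguerre's inequality.
Otherwise, condition (R) forces `q ≤ 1 / 2`, and then Hutchinson's condition
`b (m + 1) ^ 2 > 4 * b m * b (m + 2)` on the coefficients shows directly that the partial sums of
`F` alternate in sign at explicit points.
-/

section

open Filter Topology Polynomial Finset

section EntireSeries

/-- The sequences of real power series coefficients whose series converges everywhere. -/
def IsEntireSeq (c : ℕ → ℝ) : Prop := ∀ x : ℝ, Summable fun m ↦ c m * x ^ m

/-- The function represented by the power series with coefficients `c`. -/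
noncomputable def seriesSum (c : ℕ → ℝ) (x : ℝ) : ℝ := ∑' m, c m * x ^ m

/-- The coefficients of the termwise derivative of a power series. -/
def derivSeq (c : ℕ → ℝ) (m : ℕ) : ℝ := (m + 1) * c (m + 1)

/-- The coefficients of `f + τ x f'`, where `f` is the power series with coefficients `c`. -/
def eulerSeq (τ : ℝ) (c : ℕ → ℝ) (m : ℕ) : ℝ := (1 + τ * m) * c m

/-- The sequence `K ^ m * ρ ^ (m (m - 1))`, which decays superexponentially for `|ρ| < 1`. It
dominates the coefficients of every power series considered below. -/
def superGeom (K ρ : ℝ) (m : ℕ) : ℝ := K ^ m * ρ ^ (m * (m - 1))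

theorem isEntireSeq_superGeom (K : ℝ) {ρ : ℝ} (hρ : |ρ| < 1) : IsEntireSeq (superGeom K ρ) := by
  intro x
  have hsmall : Tendsto (fun m : ℕ ↦ |K * x * ρ ^ (m - 1)|) atTop (𝓝 0) := by
    simpa using (((tendsto_pow_atTop_nhds_zero_of_abs_lt_one hρ).comp
      (tendsto_sub_atTop_nat 1)).const_mul (K * x)).abs
  refine .of_norm_bounded_eventually_nat summable_geometric_two ?_
  filter_upwards [hsmall.eventually (gt_mem_nhds one_half_pos)] with m hm
  have hpow : superGeom K ρ m * x ^ m = (K * x * ρ ^ (m - 1)) ^ m := by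
    rw [superGeom, mul_pow, mul_pow, ← pow_mul, mul_comm m (m - 1)]
    ring
  rw [hpow, norm_pow]
  exact pow_le_pow_left₀ (norm_nonneg _) hm.le m

namespace IsEntireSeq

variable {c d : ℕ → ℝ}

theorem mono (hd : IsEntireSeq d) (h : ∀ m, |c m| ≤ d m) : IsEntireSeq c := fun x ↦ by
  refine .of_norm_bounded (hd x).norm fun m ↦ ?_
  rw [norm_mul, norm_mul]
  exact mul_le_mul_of_nonneg_right ((h m).trans (le_abs_self _)) (norm_nonneg _)

protected theorem derivSeq (hc : IsEntireSeq c) : IsEntireSeq (derivSeq c) := fun x ↦ by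
  refine .of_norm_bounded ((summable_nat_add_iff 1).2 (hc (2 * (|x| + 1))).norm) fun m ↦ ?_
  have htwo : (m : ℝ) + 1 ≤ 2 ^ (m + 1) := mod_cast (Nat.lt_two_pow_self (n := m + 1)).le
  have hpow : |x| ^ m ≤ (|x| + 1) ^ (m + 1) :=
    (pow_le_pow_left₀ (abs_nonneg x) (by linarith) m).trans
      (pow_le_pow_right₀ (by linarith [abs_nonneg x]) m.le_succ)
  calc ‖derivSeq c m * x ^ m‖ = |c (m + 1)| * (((m : ℝ) + 1) * |x| ^ m) := by
        rw [derivSeq, norm_mul, norm_mul, norm_pow, Real.norm_of_nonneg (by positivity)]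
        simp only [Real.norm_eq_abs]
        ring
    _ ≤ |c (m + 1)| * (2 ^ (m + 1) * (|x| + 1) ^ (m + 1)) := by gcongr
    _ = ‖c (m + 1) * (2 * (|x| + 1)) ^ (m + 1)‖ := by
        rw [norm_mul, norm_pow, Real.norm_of_nonneg (by positivity : 0 ≤ 2 * (|x| + 1)),
          mul_pow, Real.norm_eq_abs]

theorem summable_abs_mul_deriv_pow (hc : IsEntireSeq c) (x : ℝ) :
    Summable fun m : ℕ ↦ |c m| * (m * |x| ^ (m - 1)) := by
  rw [← summable_nat_add_iff 1]
  refine (hc.derivSeq |x|).norm.congr fun m ↦ ?_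
  rw [derivSeq, norm_mul, norm_mul, norm_pow, Real.norm_of_nonneg (by positivity),
    Real.norm_eq_abs, Real.norm_eq_abs, abs_abs]
  push_cast
  ring_nf

theorem hasDerivAt (hc : IsEntireSeq c) (x : ℝ) :
    HasDerivAt (seriesSum c) (seriesSum (derivSeq c) x) x := by
  have hterm : ∑' m : ℕ, c m * (m * x ^ (m - 1)) = seriesSum (derivSeq c) x := by
    have hs : Summable fun m : ℕ ↦ c m * (m * x ^ (m - 1)) :=
      .of_norm ((hc.summable_abs_mul_deriv_pow x).congr fun m ↦ by simp)
    rw [hs.tsum_eq_zero_add]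
    simp only [CharP.cast_eq_zero, zero_mul, mul_zero, zero_add]
    refine tsum_congr fun m ↦ ?_
    rw [derivSeq]
    push_cast
    ring_nf
  rw [← hterm]
  refine hasDerivAt_tsum_of_isPreconnected (t := Metric.ball 0 (|x| + 1)) (y₀ := 0)
    (hc.summable_abs_mul_deriv_pow (|x| + 1)) Metric.isOpen_ball (convex_ball _ _).isPreconnected
    (fun m y _ ↦ (hasDerivAt_pow m y).const_mul (c m)) (fun m y hy ↦ ?_)
    (Metric.mem_ball_self (by positivity)) (hc 0) (by simp)
  have hy' : |y| ≤ |(|x| + 1)| :=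
    (mem_ball_zero_iff.1 hy).le.trans (le_abs_self _)
  rw [norm_mul, norm_mul, norm_pow, Real.norm_natCast]
  simp only [Real.norm_eq_abs]
  gcongr

theorem deriv_seriesSum (hc : IsEntireSeq c) :
    deriv (seriesSum c) = seriesSum (derivSeq c) :=
  funext fun x ↦ (hc.hasDerivAt x).deriv

theorem continuous (hc : IsEntireSeq c) : Continuous (seriesSum c) :=
  continuous_iff_continuousAt.2 fun x ↦ (hc.hasDerivAt x).continuousAt

theorem seriesSum_eulerSeq (hc : IsEntireSeq c) (τ x : ℝ) :
    seriesSum (eulerSeq τ c) x = seriesSum c x + τ * x * seriesSum (derivSeq c) x := by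
  have hshift : HasSum (fun m : ℕ ↦ m * c m * x ^ m) (x * seriesSum (derivSeq c) x) := by
    rw [← hasSum_nat_add_iff' 1, Finset.sum_range_one, Nat.cast_zero, zero_mul, zero_mul, sub_zero]
    refine ((hc.derivSeq x).hasSum.mul_left x).congr_fun fun m ↦ ?_
    rw [derivSeq]
    push_cast
    ring
  have hsum := (hc x).hasSum.add (hshift.mul_left τ)
  rw [← mul_assoc] at hsum
  exact (hsum.congr_fun fun m ↦ by rw [eulerSeq]; ring).tsum_eq

end IsEntireSeq

theorem seriesSum_zero (c : ℕ → ℝ) : seriesSum c 0 = c 0 := by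
  rw [seriesSum, tsum_eq_single 0 fun m hm ↦ by simp [hm], pow_zero, mul_one]

theorem eval_eq_seriesSum (P : ℝ[X]) (x : ℝ) : P.eval x = seriesSum P.coeff x := by
  rw [eval_eq_sum, Polynomial.sum, seriesSum, tsum_eq_sum]
  intro m hm
  rw [notMem_support_iff.1 hm, zero_mul]

theorem coeff_derivative_eq_derivSeq (P : ℝ[X]) : (derivative P).coeff = derivSeq P.coeff :=
  funext fun m ↦ by rw [coeff_derivative, derivSeq, mul_comm]

theorem coeff_add_euler (τ : ℝ) (P : ℝ[X]) :
    (P + C τ * X * derivative P).coeff = eulerSeq τ P.coeff := by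
  funext m
  rcases m with _ | m
  · simp [eulerSeq]
  · rw [coeff_add, mul_assoc, coeff_C_mul, coeff_X_mul, coeff_derivative, eulerSeq]
    push_cast
    ring

theorem abs_eulerSeq_le_superGeom {c : ℕ → ℝ} {K ρ τ : ℝ} (hτ : 0 ≤ τ) {m : ℕ}
    (h : |c m| ≤ superGeom K ρ m) : |eulerSeq τ c m| ≤ superGeom ((1 + τ) * K) ρ m := by
  have hbernoulli : 1 + τ * m ≤ (1 + τ) ^ m := by
    simpa [mul_comm] using one_add_mul_le_pow (by linarith : -2 ≤ τ) m
  rw [eulerSeq, abs_mul, abs_of_nonneg (by positivity), superGeom, mul_pow, mul_assoc]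
  exact mul_le_mul hbernoulli h (abs_nonneg _) (by positivity)

/-- Coefficientwise convergence of the polynomials `P N` to the power series with coefficients `c`,
with all coefficients dominated by the entire sequence `d`. -/
structure DominatedLimit (P : ℕ → ℝ[X]) (c d : ℕ → ℝ) : Prop where
  isEntireSeq_bound : IsEntireSeq d
  abs_coeff_le : ∀ N m, |(P N).coeff m| ≤ d m
  tendsto_coeff : ∀ m, Tendsto (fun N ↦ (P N).coeff m) atTop (𝓝 (c m))

namespace DominatedLimit

variable {P : ℕ → ℝ[X]} {c d : ℕ → ℝ}

theorem isEntireSeq (h : DominatedLimit P c d) : IsEntireSeq c :=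
  h.isEntireSeq_bound.mono fun m ↦
    le_of_tendsto (h.tendsto_coeff m).abs (.of_forall fun N ↦ h.abs_coeff_le N m)

theorem tendsto_eval (h : DominatedLimit P c d) (x : ℝ) :
    Tendsto (fun N ↦ (P N).eval x) atTop (𝓝 (seriesSum c x)) := by
  simp only [eval_eq_seriesSum]
  refine tendsto_tsum_of_dominated_convergence (h.isEntireSeq_bound |x|)
    (fun m ↦ (h.tendsto_coeff m).mul_const _) (.of_forall fun N m ↦ ?_)
  rw [norm_mul, norm_pow]
  exact mul_le_mul_of_nonneg_right (h.abs_coeff_le N m) (by positivity)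

protected theorem derivative (h : DominatedLimit P c d) :
    DominatedLimit (fun N ↦ derivative (P N)) (derivSeq c) (derivSeq d) where
  isEntireSeq_bound := h.isEntireSeq_bound.derivSeq
  abs_coeff_le N m := by
    rw [coeff_derivative_eq_derivSeq, derivSeq, derivSeq, abs_mul, abs_of_nonneg (by positivity)]
    exact mul_le_mul_of_nonneg_left (h.abs_coeff_le N _) (by positivity)
  tendsto_coeff m := by
    simp only [coeff_derivative_eq_derivSeq]
    exact (h.tendsto_coeff (m + 1)).const_mul _

theorem add_euler {K ρ τ : ℝ} (h : DominatedLimit P c (superGeom K ρ)) (hρ : |ρ| < 1)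
    (hτ : 0 ≤ τ) :
    DominatedLimit (fun N ↦ P N + C τ * X * derivative (P N)) (eulerSeq τ c)
      (superGeom ((1 + τ) * K) ρ) where
  isEntireSeq_bound := isEntireSeq_superGeom _ hρ
  abs_coeff_le N m := by
    rw [coeff_add_euler]
    exact abs_eulerSeq_le_superGeom hτ (h.abs_coeff_le N m)
  tendsto_coeff m := by
    simp only [coeff_add_euler]
    exact (h.tendsto_coeff m).const_mul _

end DominatedLimit

end EntireSeries

section ReciprocalRoots

theorem coeff_succ_mul_one_sub_C_mul_X {R : Type*} [CommRing R] (P : R[X]) (r : R) (m : ℕ) :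
    (P * (1 - C r * X)).coeff (m + 1) = P.coeff (m + 1) - r * P.coeff m := by
  rw [mul_sub, mul_one, coeff_sub, mul_left_comm, coeff_C_mul, coeff_mul_X]

theorem coeff_zero_prod_one_sub {R ι : Type*} [CommRing R] (s : Finset ι) (a : ι → R) :
    (∏ k ∈ s, (1 - C (a k) * X)).coeff 0 = 1 := by
  simp [coeff_zero_eq_eval_zero, eval_prod]

theorem coeff_one_prod_one_sub {R ι : Type*} [CommRing R] (s : Finset ι) (a : ι → R) :
    (∏ k ∈ s, (1 - C (a k) * X)).coeff 1 = -∑ k ∈ s, a k := by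
  classical
  induction s using Finset.induction_on with
  | empty => simp [coeff_one]
  | insert j s hj ih =>
    rw [prod_insert hj, mul_comm, coeff_succ_mul_one_sub_C_mul_X, ih, coeff_zero_prod_one_sub,
      sum_insert hj]
    ring

theorem sum_sq_eq_coeff_prod_one_sub {R ι : Type*} [CommRing R] (s : Finset ι) (a : ι → R) :
    ∑ k ∈ s, a k ^ 2 = (∏ k ∈ s, (1 - C (a k) * X)).coeff 1 ^ 2 -
      2 * (∏ k ∈ s, (1 - C (a k) * X)).coeff 2 := by
  classical
  induction s using Finset.induction_on with
  | empty => simp [coeff_one]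
  | insert j s hj ih =>
    rw [prod_insert hj, mul_comm, coeff_succ_mul_one_sub_C_mul_X, coeff_succ_mul_one_sub_C_mul_X,
      coeff_zero_prod_one_sub, sum_insert hj, ih]
    ring

theorem prod_range_le_coeff_prod_one_sub {a : ℕ → ℝ} (ha : ∀ k, 0 ≤ a k) (n m : ℕ) :
    0 ≤ (-1) ^ m * (∏ k ∈ range n, (1 - C (a k) * X)).coeff m ∧
      (m ≤ n → ∏ k ∈ range m, a k ≤ (-1) ^ m * (∏ k ∈ range n, (1 - C (a k) * X)).coeff m) := by
  induction n generalizing m with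
  | zero => rcases m with _ | m <;> simp [coeff_one]
  | succ n ih =>
    rcases m with _ | m
    · simp [coeff_zero_prod_one_sub]
    · obtain ⟨hpos, hle⟩ := ih (m + 1)
      have hpos' := mul_nonneg (ha n) (ih m).1
      have hexp : (-1) ^ (m + 1) * (∏ k ∈ range (n + 1), (1 - C (a k) * X)).coeff (m + 1) =
          (-1) ^ (m + 1) * (∏ k ∈ range n, (1 - C (a k) * X)).coeff (m + 1) +
            a n * ((-1) ^ m * (∏ k ∈ range n, (1 - C (a k) * X)).coeff m) := by
        rw [prod_range_succ, coeff_succ_mul_one_sub_C_mul_X]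
        ring
      rw [hexp]
      refine ⟨by positivity, fun hmn ↦ ?_⟩
      rcases hmn.lt_or_eq with hlt | heq
      · linarith [hle (by lia)]
      · obtain rfl : m = n := by lia
        rw [prod_range_succ, mul_comm]
        linarith [mul_le_mul_of_nonneg_left ((ih m).2 le_rfl) (ha m)]

/-- `a` lists, in decreasing order and padded with zeros, the reciprocals of the roots of a
polynomial `P` with `P 0 = 1`, so that `P = ∏ (1 - a k X)`. -/
structure IsRecipRoots (P : ℝ[X]) (a : ℕ → ℝ) : Prop where
  antitone : Antitone a
  exists_eq_prod : ∃ n, (∀ k ∉ range n, a k = 0) ∧ P = ∏ k ∈ range n, (1 - C (a k) * X)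

namespace IsRecipRoots

variable {P : ℝ[X]} {a : ℕ → ℝ} {K ρ : ℝ}

theorem nonneg (h : IsRecipRoots P a) (k : ℕ) : 0 ≤ a k := by
  obtain ⟨n, hn, -⟩ := h.exists_eq_prod
  exact (hn _ (by simp)).ge.trans (h.antitone (le_max_left k n))

theorem eval_eq_tprod (h : IsRecipRoots P a) (x : ℝ) : P.eval x = ∏' k, (1 - a k * x) := by
  obtain ⟨n, hn, rfl⟩ := h.exists_eq_prod
  rw [eval_prod, tprod_eq_prod fun k hk ↦ by rw [hn k hk, zero_mul, sub_zero]]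
  simp

theorem tsum_eq (h : IsRecipRoots P a) : ∑' k, a k = -P.coeff 1 := by
  obtain ⟨n, hn, rfl⟩ := h.exists_eq_prod
  rw [coeff_one_prod_one_sub, neg_neg, tsum_eq_sum hn]

theorem tsum_sq_eq (h : IsRecipRoots P a) :
    ∑' k, a k ^ 2 = P.coeff 1 ^ 2 - 2 * P.coeff 2 := by
  obtain ⟨n, hn, rfl⟩ := h.exists_eq_prod
  rw [← sum_sq_eq_coeff_prod_one_sub,
    tsum_eq_sum fun k hk ↦ by rw [hn k hk, zero_pow two_ne_zero]]

theorem prod_range_le_abs_coeff (h : IsRecipRoots P a) (m : ℕ) :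
    ∏ k ∈ range m, a k ≤ |P.coeff m| := by
  obtain ⟨n, hn, hP⟩ := h.exists_eq_prod
  rcases le_or_gt m n with hmn | hnm
  · rw [hP]
    refine ((prod_range_le_coeff_prod_one_sub h.nonneg n m).2 hmn).trans ((le_abs_self _).trans ?_)
    simp [abs_mul]
  · rw [prod_eq_zero (mem_range.2 hnm) (hn n notMem_range_self)]
    exact abs_nonneg _

theorem le_of_abs_coeff_le_superGeom (h : IsRecipRoots P a) (hρ : 0 ≤ ρ)
    (hP : ∀ m, |P.coeff m| ≤ superGeom K ρ m) (k : ℕ) : a k ≤ K * ρ ^ k := by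
  have hK : 0 ≤ K := by simpa [superGeom] using (abs_nonneg _).trans (hP 1)
  refine le_of_pow_le_pow_left₀ k.succ_ne_zero (by positivity) ?_
  calc a k ^ (k + 1) = ∏ _j ∈ range (k + 1), a k := by simp
    _ ≤ ∏ j ∈ range (k + 1), a j := prod_le_prod (fun _ _ ↦ h.nonneg k) fun j hj ↦
        h.antitone (Nat.le_of_lt_succ (mem_range.1 hj))
    _ ≤ superGeom K ρ (k + 1) := (h.prod_range_le_abs_coeff _).trans (hP _)
    _ = (K * ρ ^ k) ^ (k + 1) := by
        rw [superGeom, mul_pow, ← pow_mul, Nat.add_sub_cancel, mul_comm k]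

end IsRecipRoots

/-- The genus zero Hadamard factorisation `∑ c m x ^ m = ∏ (1 - u k x)` with `u ≥ 0` summable,
together with the first two Newton identities. The terms `u k = 0` are padding. -/
structure HasRecipZeros (c u : ℕ → ℝ) : Prop where
  nonneg : ∀ k, 0 ≤ u k
  summable : Summable u
  seriesSum_eq : ∀ x, seriesSum c x = ∏' k, (1 - u k * x)
  tsum_eq : ∑' k, u k = -c 1
  tsum_sq_eq : ∑' k, u k ^ 2 = c 1 ^ 2 - 2 * c 2

theorem exists_subseq_tendsto_of_mem_Icc {a : ℕ → ℕ → ℝ} {b : ℕ → ℝ}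
    (h : ∀ N k, a N k ∈ Set.Icc 0 (b k)) :
    ∃ (u : ℕ → ℝ) (φ : ℕ → ℕ), StrictMono φ ∧
      ∀ k, Tendsto (fun N ↦ a (φ N) k) atTop (𝓝 (u k)) := by
  have hcompact := isCompact_univ_pi fun k ↦ isCompact_Icc (a := 0) (b := b k)
  obtain ⟨u, -, φ, hφ, hu⟩ := hcompact.tendsto_subseq (x := a) fun N k _ ↦ h N k
  exact ⟨u, φ, hφ, fun k ↦ tendsto_pi_nhds.1 hu k⟩

section Limit

variable {P : ℕ → ℝ[X]} {a : ℕ → ℕ → ℝ} {c : ℕ → ℝ} {K ρ : ℝ}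

theorem DominatedLimit.comp {d : ℕ → ℝ} (h : DominatedLimit P c d) {φ : ℕ → ℕ}
    (hφ : StrictMono φ) : DominatedLimit (fun N ↦ P (φ N)) c d :=
  ⟨h.isEntireSeq_bound, fun N ↦ h.abs_coeff_le (φ N),
    fun m ↦ (h.tendsto_coeff m).comp hφ.tendsto_atTop⟩

theorem HasRecipZeros.of_tendsto {u : ℕ → ℝ} (h : DominatedLimit P c (superGeom K ρ))
    (hρ0 : 0 ≤ ρ) (hρ1 : ρ < 1) (ha : ∀ N, IsRecipRoots (P N) (a N))
    (hu : ∀ k, Tendsto (fun N ↦ a N k) atTop (𝓝 (u k))) : HasRecipZeros c u := by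
  have hle : ∀ N k, a N k ≤ K * ρ ^ k := fun N ↦
    (ha N).le_of_abs_coeff_le_superGeom hρ0 (h.abs_coeff_le N)
  have hgeom : Summable fun k ↦ K * ρ ^ k := (summable_geometric_of_lt_one hρ0 hρ1).mul_left K
  have hnonneg : ∀ k, 0 ≤ u k := fun k ↦ ge_of_tendsto' (hu k) fun N ↦ (ha N).nonneg k
  refine ⟨hnonneg, hgeom.of_nonneg_of_le hnonneg fun k ↦ le_of_tendsto' (hu k) (hle · k),
    fun x ↦ ?_, ?_, ?_⟩
  · refine tendsto_nhds_unique (h.tendsto_eval x) ?_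
    simp only [(ha _).eval_eq_tprod, sub_eq_add_neg]
    refine tendsto_tprod_one_add_of_dominated_convergence (hgeom.mul_right |x|)
      (fun k ↦ ((hu k).mul_const x).neg) (.of_forall fun N k ↦ ?_)
    rw [norm_neg, norm_mul, Real.norm_of_nonneg ((ha N).nonneg k)]
    exact mul_le_mul_of_nonneg_right (hle N k) (abs_nonneg x)
  · refine tendsto_nhds_unique (tendsto_tsum_of_dominated_convergence hgeom hu
      (.of_forall fun N k ↦ ?_)) (by simpa only [(ha _).tsum_eq] using (h.tendsto_coeff 1).neg)
    rw [Real.norm_of_nonneg ((ha N).nonneg k)]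
    exact hle N k
  · have hgeom_sq : Summable fun k ↦ (K * ρ ^ k) ^ 2 := by
      simp only [mul_pow, pow_right_comm _ _ 2]
      exact (summable_geometric_of_lt_one (sq_nonneg ρ)
        (pow_lt_one₀ hρ0 hρ1 two_ne_zero)).mul_left (K ^ 2)
    refine tendsto_nhds_unique (tendsto_tsum_of_dominated_convergence hgeom_sq
      (fun k ↦ (hu k).pow 2) (.of_forall fun N k ↦ ?_))
      (by simpa only [(ha _).tsum_sq_eq] using
        ((h.tendsto_coeff 1).pow 2).sub ((h.tendsto_coeff 2).const_mul 2))
    rw [norm_pow, Real.norm_of_nonneg ((ha N).nonneg k)]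
    exact pow_le_pow_left₀ ((ha N).nonneg k) (hle N k) 2

theorem exists_hasRecipZeros_of_tendsto (h : DominatedLimit P c (superGeom K ρ))
    (hρ0 : 0 ≤ ρ) (hρ1 : ρ < 1) (ha : ∀ N, IsRecipRoots (P N) (a N)) :
    ∃ (u : ℕ → ℝ) (φ : ℕ → ℕ), StrictMono φ ∧
      (∀ k, Tendsto (fun N ↦ a (φ N) k) atTop (𝓝 (u k))) ∧ HasRecipZeros c u := by
  obtain ⟨u, φ, hφ, hu⟩ := exists_subseq_tendsto_of_mem_Icc (a := a) fun N k ↦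
    ⟨(ha N).nonneg k, (ha N).le_of_abs_coeff_le_superGeom hρ0 (h.abs_coeff_le N) k⟩
  exact ⟨u, φ, hφ, hu, .of_tendsto (h.comp hφ) hρ0 hρ1 (fun N ↦ ha (φ N)) hu⟩

end Limit

theorem tprod_one_sub_mul_eq_mul_tprod_update {u : ℕ → ℝ} (hu : Summable u) (i : ℕ) (x : ℝ) :
    ∏' k, (1 - u k * x) = (1 - u i * x) * ∏' k, (1 - Function.update u i 0 k * x) := by
  have hupdate : Function.update (fun k ↦ 1 - u k * x) i 1 =
      fun k ↦ 1 + -(Function.update u i 0 k * x) := by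
    ext k
    rcases eq_or_ne k i with rfl | hk <;> simp [*, sub_eq_add_neg]
  have hmult : Multipliable (Function.update (fun k ↦ 1 - u k * x) i 1) :=
    hupdate ▸ multipliable_one_add_of_summable ((hu.update i 0).mul_right x).neg.norm
  rw [hmult.tprod_eq_mul_tprod_ite']
  congr 2
  ext k
  rcases eq_or_ne k i with rfl | hk <;> simp [*]

theorem continuous_tprod_one_sub_mul {u : ℕ → ℝ} (hu : Summable u) :
    Continuous fun x ↦ ∏' k, (1 - u k * x) := by
  refine continuous_iff_continuousAt.2 fun x ↦ ?_
  simp only [ContinuousAt, sub_eq_add_neg]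
  refine tendsto_tprod_one_add_of_dominated_convergence (hu.norm.mul_right (|x| + 1))
    (fun k ↦ (tendsto_id.const_mul (u k)).neg) ?_
  filter_upwards [Metric.ball_mem_nhds x one_pos] with y hy k
  rw [norm_neg, norm_mul]
  refine mul_le_mul_of_nonneg_left ?_ (norm_nonneg _)
  have hdist := norm_sub_norm_le y x
  rw [mem_ball_iff_norm] at hy
  simp only [Real.norm_eq_abs] at hdist hy ⊢
  linarith

namespace HasRecipZeros

variable {c u : ℕ → ℝ}

theorem seriesSum_eq_zero_iff (h : HasRecipZeros c u) {x : ℝ} :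
    seriesSum c x = 0 ↔ ∃ k, u k * x = 1 := by
  rw [h.seriesSum_eq]
  constructor
  · contrapose!
    intro hne
    have hprod := tprod_one_add_ne_zero_of_summable (f := fun k ↦ -(u k * x))
      (fun k ↦ by rw [← sub_eq_add_neg]; exact sub_ne_zero.2 (hne k).symm)
      (by simpa using (h.summable.mul_right x).norm)
    simpa only [sub_eq_add_neg] using hprod
  · rintro ⟨k, hk⟩
    exact tprod_of_exists_eq_zero ⟨k, by rw [hk, sub_self]⟩

theorem seriesSum_derivSeq_eq_zero (h : HasRecipZeros c u) (hc : IsEntireSeq c) {i j : ℕ}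
    (hij : i ≠ j) {x : ℝ} (hi : u i * x = 1) (hj : u j * x = 1) :
    seriesSum (derivSeq c) x = 0 := by
  set g : ℝ → ℝ := fun y ↦ ∏' k, (1 - Function.update u i 0 k * y)
  have hgx : g x = 0 :=
    tprod_of_exists_eq_zero ⟨j, by rw [Function.update_of_ne hij.symm, hj, sub_self]⟩
  have hg : Tendsto g (𝓝[≠] x) (𝓝 0) := by
    have hcont := continuous_tprod_one_sub_mul (h.summable.update i 0)
    exact hgx ▸ hcont.continuousAt.tendsto.mono_left nhdsWithin_le_nhds
  have hderiv : HasDerivAt (seriesSum c) 0 x := by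
    have hfactor (y : ℝ) : seriesSum c y = u i * (x - y) * g y := by
      rw [h.seriesSum_eq, tprod_one_sub_mul_eq_mul_tprod_update h.summable i, mul_sub, hi]
    have hlim : Tendsto (fun y ↦ -u i * g y) (𝓝[≠] x) (𝓝 0) := by
      simpa using hg.const_mul (-u i)
    refine hasDerivAt_iff_tendsto_slope.2 (hlim.congr' ?_)
    filter_upwards [self_mem_nhdsWithin] with y hy
    have hyx : y - x ≠ 0 := sub_ne_zero.2 hy
    rw [slope_def_field, hfactor y, hfactor x, sub_self, mul_zero, zero_mul, sub_zero]
    field_simp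
    ring
  exact (hc.hasDerivAt x).unique hderiv

theorem tsum_inv_pow_eq (h : HasRecipZeros c u) (hu : Set.InjOn u (Function.support u))
    {η : ℕ → ℝ} (hη : η.Injective) (hrange : ∀ x, 0 < x → (seriesSum c x = 0 ↔ x ∈ Set.range η))
    (hpos : ∀ n, 0 < η n) {p : ℕ} (hp : p ≠ 0) :
    ∑' n, (η n)⁻¹ ^ p = ∑' k, u k ^ p := by
  have hindex (n : ℕ) : ∃ k, u k = (η n)⁻¹ := by
    obtain ⟨k, hk⟩ := h.seriesSum_eq_zero_iff.1 ((hrange _ (hpos n)).2 ⟨n, rfl⟩)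
    exact ⟨k, eq_inv_of_mul_eq_one_left hk⟩
  choose index hindex using hindex
  refine (tsum_eq_tsum_of_ne_zero_bij (fun n ↦ index n) (fun m n hmn ↦ ?_) (fun k hk ↦ ?_)
    fun n ↦ by rw [hindex]).symm
  · exact Subtype.ext (hη (inv_injective (by rw [← hindex, ← hindex]; exact congrArg u hmn)))
  · have hk0 : u k ≠ 0 := fun h0 ↦ hk (by simp [h0, hp])
    obtain ⟨n, hn⟩ := (hrange _ (inv_pos.2 ((h.nonneg k).lt_of_ne' hk0))).1
      (h.seriesSum_eq_zero_iff.2 ⟨k, mul_inv_cancel₀ hk0⟩)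
    have hun : u (index n) = u k := by rw [hindex, hn, inv_inv]
    refine ⟨⟨n, ?_⟩, hu (by rwa [Function.mem_support, hun]) hk0 hun⟩
    simpa [hn] using fun h0 ↦ absurd h0 hk0

end HasRecipZeros

end ReciprocalRoots

section PosRooted

/-- All complex zeros of the real polynomial `P` are real and positive. -/
def PosRooted (P : ℝ[X]) : Prop := ∀ w : ℂ, aeval w P = 0 → ∃ r : ℝ, 0 < r ∧ w = r

theorem PosRooted.of_mul_left {P Q : ℝ[X]} (h : PosRooted (P * Q)) : PosRooted Q :=
  fun w hw ↦ h w (by rw [map_mul, hw, mul_zero])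

theorem exists_eq_one_sub_C_inv_mul_X_mul {P : ℝ[X]} {r : ℝ} (hr : r ≠ 0) (h : P.IsRoot r) :
    ∃ Q : ℝ[X], P = (1 - C r⁻¹ * X) * Q := by
  obtain ⟨Q, rfl⟩ := dvd_iff_isRoot.2 h
  refine ⟨-C r * Q, ?_⟩
  have hC : C r * C r⁻¹ = (1 : ℝ[X]) := by rw [← C_mul, mul_inv_cancel₀ hr, C_1]
  linear_combination -X * Q * hC

theorem PosRooted.exists_eq_multiset_prod {P : ℝ[X]} (h : PosRooted P) (h0 : P.coeff 0 = 1) :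
    ∃ s : Multiset ℝ, (∀ r ∈ s, 0 ≤ r) ∧ P = (s.map fun r ↦ 1 - C r * X).prod := by
  induction hn : P.natDegree generalizing P with
  | zero =>
    refine ⟨0, by simp, ?_⟩
    rw [eq_C_of_natDegree_eq_zero hn, h0]
    simp
  | succ n ih =>
    obtain ⟨w, hw⟩ := IsAlgClosed.exists_aeval_eq_zero ℂ P fun hdeg ↦ by
      rw [natDegree_eq_of_degree_eq_some hdeg] at hn
      simp at hn
    obtain ⟨r, hr, rfl⟩ := h w hw
    have hroot : P.IsRoot r := by
      rw [← Complex.coe_algebraMap, aeval_algebraMap_apply] at hw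
      simpa using hw
    obtain ⟨Q, rfl⟩ := exists_eq_one_sub_C_inv_mul_X_mul hr.ne' hroot
    have hfactor : (1 - C r⁻¹ * X : ℝ[X]).natDegree = 1 := by
      compute_degree!
      exact hr.ne'
    have hdeg : Q.natDegree = n := by
      rw [natDegree_mul (by rintro h; simp [h] at hfactor) (by rintro rfl; simp at h0),
        hfactor] at hn
      lia
    obtain ⟨s, hs, rfl⟩ := ih h.of_mul_left (by simpa using h0) hdeg
    exact ⟨r⁻¹ ::ₘ s, by simpa using ⟨hr.le, hs⟩, by simp⟩

theorem exists_isRecipRoots_multiset_prod {s : Multiset ℝ} (hs : ∀ r ∈ s, 0 ≤ r) :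
    ∃ a, IsRecipRoots (s.map fun r ↦ 1 - C r * X).prod a := by
  set l := s.sort (· ≥ ·)
  have hnonneg (k : ℕ) : 0 ≤ l.getD k 0 := by
    rcases lt_or_ge k l.length with hlt | hge
    · rw [List.getD_eq_getElem _ _ hlt]
      exact hs _ ((Multiset.mem_sort _).1 (List.getElem_mem hlt))
    · rw [List.getD_eq_default _ _ hge]
  refine ⟨fun k ↦ l.getD k 0, antitone_nat_of_succ_le fun k ↦ ?_, l.length, fun k hk ↦ ?_, ?_⟩
  · rcases lt_or_ge (k + 1) l.length with hlt | hge
    · rw [List.getD_eq_getElem _ _ hlt, List.getD_eq_getElem _ _ (k.lt_succ_self.trans hlt)]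
      exact List.pairwise_iff_getElem.1 (s.pairwise_sort (· ≥ ·)) _ _ _ _ k.lt_succ_self
    · rw [List.getD_eq_default _ _ hge]
      exact hnonneg k
  · exact List.getD_eq_default _ _ (by simpa using hk)
  · simp only [prod_range, Fin.is_lt, List.getD_eq_getElem]
    rw [Fin.prod_univ_fun_getElem l fun r ↦ 1 - C r * X, ← Multiset.prod_coe, ← Multiset.map_coe,
      Multiset.sort_eq]

theorem PosRooted.exists_isRecipRoots {P : ℝ[X]} (h : PosRooted P) (h0 : P.coeff 0 = 1) :
    ∃ a, IsRecipRoots P a := by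
  obtain ⟨s, hs, rfl⟩ := h.exists_eq_multiset_prod h0
  exact exists_isRecipRoots_multiset_prod hs

/- With `t = 1 - r w`, the factor `1 - r w` contributes `-r w / t = (r² |w|² - r w) / |t|²`. -/
theorem exists_mul_aeval_derivative_prod_eq {ι : Type*} {s : Finset ι} {a : ι → ℝ}
    (ha : ∀ k, 0 ≤ a k) {w : ℂ} (hw : aeval w (∏ k ∈ s, (1 - C (a k) * X)) ≠ 0) :
    ∃ A B : ℝ, 0 ≤ A ∧ 0 ≤ B ∧ w * aeval w (derivative (∏ k ∈ s, (1 - C (a k) * X))) =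
      (B - A * w) * aeval w (∏ k ∈ s, (1 - C (a k) * X)) := by
  classical
  induction s using Finset.induction_on with
  | empty => exact ⟨0, 0, le_rfl, le_rfl, by simp⟩
  | insert j s hj ih =>
    rw [prod_insert hj] at hw ⊢
    set Q := ∏ k ∈ s, (1 - C (a k) * X)
    rw [map_mul] at hw
    obtain ⟨A, B, hA, hB, hQ⟩ := ih (right_ne_zero_of_mul hw)
    have hne : 1 - (a j : ℂ) * w ≠ 0 := by simpa using left_ne_zero_of_mul hw
    set N := Complex.normSq (1 - a j * w) with hN
    have hNpos : 0 < N := Complex.normSq_pos.2 hne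
    refine ⟨A + a j / N, B + a j ^ 2 * Complex.normSq w / N,
      add_nonneg hA (div_nonneg (ha j) hNpos.le),
      add_nonneg hB (div_nonneg (mul_nonneg (sq_nonneg _) (Complex.normSq_nonneg w)) hNpos.le), ?_⟩
    have hconj : (N : ℂ) = (1 - a j * w) * (1 - a j * (starRingEnd ℂ) w) := by
      rw [hN, ← Complex.mul_conj]
      simp
    have hNne : (N : ℂ) ≠ 0 := mod_cast hNpos.ne'
    have hterm : -(a j * w) = (a j ^ 2 * Complex.normSq w / N - a j / N * w) * (1 - a j * w) := by
      rw [← Complex.mul_conj w]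
      field_simp
      rw [hconj]
      ring
    simp only [derivative_mul, derivative_one, derivative_C, derivative_X, map_add,
      map_mul, map_sub, map_one, map_zero, aeval_C, aeval_X, Complex.coe_algebraMap]
    push_cast
    linear_combination (1 - a j * w) * hQ + aeval w Q * hterm

theorem PosRooted.add_euler {P : ℝ[X]} (h : PosRooted P) (h0 : P.coeff 0 = 1) {τ : ℝ}
    (hτ : 0 ≤ τ) : PosRooted (P + C τ * X * derivative P) := by
  intro w hw
  by_cases hPw : aeval w P = 0
  · exact h w hPw
  obtain ⟨a, ha⟩ := h.exists_isRecipRoots h0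
  obtain ⟨n, -, hP⟩ := ha.exists_eq_prod
  obtain ⟨A, B, hA, hB, hAB⟩ := exists_mul_aeval_derivative_prod_eq ha.nonneg (hP ▸ hPw)
  rw [← hP] at hAB
  have hlin : 1 + τ * B = τ * A * w := by
    refine mul_right_cancel₀ hPw ?_
    simp only [map_add, map_mul, aeval_C, aeval_X, Complex.coe_algebraMap] at hw
    linear_combination hw - τ * hAB
  have hpos : 0 < 1 + τ * B := by positivity
  have hne : τ * A ≠ 0 := fun hzero ↦ by
    rw [← Complex.ofReal_mul τ A, hzero, Complex.ofReal_zero, zero_mul] at hlin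
    exact hpos.ne' (mod_cast hlin)
  refine ⟨(1 + τ * B) / (τ * A), div_pos hpos ((mul_nonneg hτ hA).lt_of_ne' hne), ?_⟩
  push_cast
  rw [hlin, mul_div_cancel_left₀ _ (mod_cast hne)]

end PosRooted

section Laguerre

/-- The numerator `P P' + X (P P'' - P' ^ 2)` of the derivative of `x P' / P`, whose sign is
governed by Laguerre's inequality. -/
noncomputable def laguerre (P : ℝ[X]) : ℝ[X] :=
  P * derivative P + X * (P * derivative (derivative P) - derivative P ^ 2)

theorem laguerre_mul_one_sub_C_mul_X (r : ℝ) (P : ℝ[X]) :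
    laguerre ((1 - C r * X) * P) = (1 - C r * X) ^ 2 * laguerre P - C r * P ^ 2 := by
  simp only [laguerre, derivative_mul, derivative_add, derivative_sub, derivative_one,
    derivative_zero, derivative_C, derivative_X]
  ring

theorem eval_laguerre_prod_nonpos {ι : Type*} (s : Finset ι) {a : ι → ℝ} (ha : ∀ k, 0 ≤ a k)
    (x : ℝ) : (laguerre (∏ k ∈ s, (1 - C (a k) * X))).eval x ≤ 0 := by
  classical
  induction s using Finset.induction_on with
  | empty => simp [laguerre]
  | insert j s hj ih =>
    rw [prod_insert hj, laguerre_mul_one_sub_C_mul_X, eval_sub, eval_mul, eval_pow, eval_C_mul,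
      eval_pow]
    have hfirst := mul_nonpos_of_nonneg_of_nonpos (sq_nonneg ((1 - C (a j) * X).eval x)) ih
    have hsecond := mul_nonneg (ha j) (sq_nonneg ((∏ k ∈ s, (1 - C (a k) * X)).eval x))
    linarith

theorem IsRecipRoots.sq_mul_eval_laguerre_le {P : ℝ[X]} {a : ℕ → ℝ} (h : IsRecipRoots P a)
    (x : ℝ) : (1 - a 0 * x) ^ 2 * (laguerre P).eval x ≤ -(a 0 * P.eval x ^ 2) := by
  obtain ⟨n, hn, rfl⟩ := h.exists_eq_prod
  rcases n.eq_zero_or_pos with rfl | hpos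
  · simp [laguerre, hn 0]
  · rw [← mul_prod_erase _ _ (mem_range.2 hpos), laguerre_mul_one_sub_C_mul_X]
    have hnonpos := eval_laguerre_prod_nonpos ((range n).erase 0) h.nonneg x
    simp only [eval_sub, eval_mul, eval_pow, eval_one, eval_C, eval_X]
    nlinarith [mul_nonneg (pow_nonneg (sq_nonneg (1 - a 0 * x)) 2) (neg_nonneg.2 hnonpos)]

variable {P : ℕ → ℝ[X]} {c : ℕ → ℝ} {K ρ : ℝ}

theorem DominatedLimit.tendsto_eval_laguerre {d : ℕ → ℝ} (h : DominatedLimit P c d) (x : ℝ) :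
    Tendsto (fun N ↦ (laguerre (P N)).eval x) atTop (𝓝
      (seriesSum c x * seriesSum (derivSeq c) x + x *
        (seriesSum c x * seriesSum (derivSeq (derivSeq c)) x - seriesSum (derivSeq c) x ^ 2))) := by
  simp only [laguerre, eval_add, eval_mul, eval_sub, eval_pow, eval_X]
  have h0 := h.tendsto_eval x
  have h1 := h.derivative.tendsto_eval x
  have h2 := h.derivative.derivative.tendsto_eval x
  exact (h0.mul h1).add (((h0.mul h2).sub (h1.pow 2)).const_mul x)

theorem exists_laguerre_inequality (h : DominatedLimit P c (superGeom K ρ)) (hρ0 : 0 ≤ ρ)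
    (hρ1 : ρ < 1) (hP : ∀ N, PosRooted (P N)) (hP0 : ∀ N, (P N).coeff 0 = 1) (hc1 : c 1 ≠ 0) :
    ∃ v : ℝ, 0 < v ∧ ∀ x, (1 - v * x) ^ 2 * (seriesSum c x * seriesSum (derivSeq c) x + x *
      (seriesSum c x * seriesSum (derivSeq (derivSeq c)) x - seriesSum (derivSeq c) x ^ 2)) ≤
        -(v * seriesSum c x ^ 2) := by
  choose a ha using fun N ↦ (hP N).exists_isRecipRoots (hP0 N)
  obtain ⟨v, φ, hφ, hv, hcv⟩ := exists_hasRecipZeros_of_tendsto h hρ0 hρ1 ha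
  have hle (k : ℕ) : v k ≤ v 0 := le_of_tendsto_of_tendsto' (hv k) (hv 0) fun N ↦
    (ha (φ N)).antitone k.zero_le
  refine ⟨v 0, (hcv.nonneg 0).lt_of_ne' fun hv0 ↦ hc1 ?_, fun x ↦ ?_⟩
  · have hzero : v = 0 := funext fun k ↦ ((hle k).trans hv0.le).antisymm (hcv.nonneg k)
    simpa [hzero] using hcv.tsum_eq
  · have h' := h.comp hφ
    exact le_of_tendsto_of_tendsto'
      (((((hv 0).mul_const x).const_sub 1).pow 2).mul (h'.tendsto_eval_laguerre x))
      ((hv 0).mul ((h'.tendsto_eval x).pow 2)).neg fun N ↦ (ha (φ N)).sq_mul_eval_laguerre_le x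

/-- The series with coefficients `c` is a genus zero product whose zeros are positive and simple. -/
def HasSimpleRecipZeros (c : ℕ → ℝ) : Prop :=
  ∃ u, HasRecipZeros c u ∧ Set.InjOn u (Function.support u)

theorem IsEntireSeq.seriesSum_derivSeq_eulerSeq (hc : IsEntireSeq c) {τ : ℝ}
    (hτc : IsEntireSeq (eulerSeq τ c)) (x : ℝ) :
    seriesSum (derivSeq (eulerSeq τ c)) x = seriesSum (derivSeq c) x +
      τ * (seriesSum (derivSeq c) x + x * seriesSum (derivSeq (derivSeq c)) x) := by
  refine (hτc.hasDerivAt x).unique ?_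
  rw [show seriesSum (eulerSeq τ c) = _ from funext (hc.seriesSum_eulerSeq τ)]
  refine ((hc.hasDerivAt x).fun_add
    (((hasDerivAt_id' x).const_mul τ).fun_mul (hc.derivSeq.hasDerivAt x))).congr_deriv ?_
  ring

theorem HasRecipZeros.hasSimpleRecipZeros {u : ℕ → ℝ} (h : HasRecipZeros c u)
    (hc : IsEntireSeq c)
    (hsimple : ∀ x, 0 < x → seriesSum c x = 0 → seriesSum (derivSeq c) x ≠ 0) :
    HasSimpleRecipZeros c := by
  refine ⟨u, h, fun i hi j _ hij ↦ by_contra fun hne ↦ ?_⟩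
  have hx : u i * (u i)⁻¹ = 1 := mul_inv_cancel₀ hi
  exact hsimple _ (inv_pos.2 ((h.nonneg i).lt_of_ne' hi)) (h.seriesSum_eq_zero_iff.2 ⟨i, hx⟩)
    (h.seriesSum_derivSeq_eq_zero hc hne hx (hij ▸ hx))

theorem hasSimpleRecipZeros_eulerSeq (h : DominatedLimit P c (superGeom K ρ)) (hρ0 : 0 ≤ ρ)
    (hρ1 : ρ < 1) (hP : ∀ N, PosRooted (P N)) (hP0 : ∀ N, (P N).coeff 0 = 1) (hc1 : c 1 ≠ 0)
    (hsimple : ∀ x, 0 < x → seriesSum c x = 0 → seriesSum (derivSeq c) x ≠ 0) {τ : ℝ}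
    (hτ : 0 < τ) : HasSimpleRecipZeros (eulerSeq τ c) := by
  have hτc := h.add_euler (abs_lt.2 ⟨by linarith, hρ1⟩) hτ.le
  choose a ha using fun N ↦ ((hP N).add_euler (hP0 N) hτ.le).exists_isRecipRoots (by simp [hP0 N])
  obtain ⟨u, -, -, -, hu⟩ := exists_hasRecipZeros_of_tendsto hτc hρ0 hρ1 ha
  refine hu.hasSimpleRecipZeros hτc.isEntireSeq fun x hx hD hD' ↦ ?_
  obtain ⟨v, hv, hlaguerre⟩ := exists_laguerre_inequality h hρ0 hρ1 hP hP0 hc1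
  rw [h.isEntireSeq.seriesSum_eulerSeq] at hD
  rw [h.isEntireSeq.seriesSum_derivSeq_eulerSeq hτc.isEntireSeq] at hD'
  specialize hlaguerre x
  specialize hsimple x hx
  set f := seriesSum c x
  set f' := seriesSum (derivSeq c) x
  set f'' := seriesSum (derivSeq (derivSeq c)) x
  have hzero : f * f' + x * (f * f'' - f' ^ 2) = 0 :=
    mul_left_cancel₀ hτ.ne' (by linear_combination f * hD' - f' * hD)
  have hf : f = 0 := by
    rw [hzero, mul_zero] at hlaguerre
    by_contra hf
    linarith [show 0 < v * f ^ 2 by positivity]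
  refine hsimple hf ?_
  simpa [hf, hτ.ne', hx.ne'] using hD

end Laguerre

section Hutchinson

theorem dominatedLimit_trunc {c d : ℕ → ℝ} (hd : IsEntireSeq d) (h : ∀ m, |c m| ≤ d m) :
    DominatedLimit (fun N ↦ PowerSeries.trunc (N + 1) (PowerSeries.mk c)) c d where
  isEntireSeq_bound := hd
  abs_coeff_le N m := by
    rw [PowerSeries.coeff_trunc, PowerSeries.coeff_mk]
    split_ifs
    · exact h m
    · simpa using (abs_nonneg _).trans (h m)
  tendsto_coeff m := by
    refine tendsto_const_nhds.congr' ?_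
    filter_upwards [eventually_ge_atTop m] with N hN
    rw [PowerSeries.coeff_trunc, PowerSeries.coeff_mk, if_pos (by lia)]

theorem eq_prod_one_sub_of_isRoot {F : Type*} [Field F] {P : F[X]} {s : Finset F}
    (hdeg : P.natDegree ≤ #s) (h0 : P.eval 0 = 1) (hs : ∀ r ∈ s, r ≠ 0 ∧ P.IsRoot r) :
    P = ∏ r ∈ s, (1 - C r⁻¹ * X) := by
  classical
  have hcard : #(insert 0 s) = #s + 1 := card_insert_of_notMem fun h ↦ (hs 0 h).1 rfl
  refine eq_of_degrees_lt_of_eval_finset_eq (insert 0 s) ?_ ?_ fun x hx ↦ ?_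
  · rw [hcard]
    exact degree_le_natDegree.trans_lt (mod_cast Nat.lt_succ_of_le hdeg)
  · rw [hcard]
    refine (degree_prod_le _ _).trans_lt ((sum_le_card_nsmul _ _ 1 fun r _ ↦ ?_).trans_lt ?_)
    · compute_degree
    · rw [nsmul_one]
      exact_mod_cast Nat.lt_succ_self _
  · rcases mem_insert.1 hx with rfl | hx
    · simp [h0, eval_prod]
    · rw [(hs x hx).2, eval_prod, prod_eq_zero hx]
      simp [inv_mul_cancel₀ (hs x hx).1]

theorem sum_neg_one_pow_mul_mem_Icc_of_antitone {d : ℕ → ℝ} (hd0 : ∀ m, 0 ≤ d m)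
    (hd : ∀ m, d (m + 1) ≤ d m) (n : ℕ) : ∑ m ∈ range n, (-1) ^ m * d m ∈ Set.Icc 0 (d 0) := by
  induction n generalizing d with
  | zero => simpa using hd0 0
  | succ n ih =>
    obtain ⟨hlow, hup⟩ := ih (d := fun m ↦ d (m + 1)) (fun m ↦ hd0 _) fun m ↦ hd _
    have hsucc : ∑ m ∈ range (n + 1), (-1) ^ m * d m =
        d 0 - ∑ m ∈ range n, (-1) ^ m * d (m + 1) := by
      rw [sum_range_succ', pow_zero, one_mul, add_comm, sub_eq_add_neg, ← sum_neg_distrib]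
      exact congrArg _ (sum_congr rfl fun m _ ↦ by ring)
    rw [hsucc]
    exact ⟨by linarith [hd 0], by linarith⟩

theorem neg_one_pow_mul_sum_mem_Icc_of_monotone {d : ℕ → ℝ} (hd0 : 0 ≤ d 0) {n : ℕ}
    (hd : ∀ m < n, d m ≤ d (m + 1)) :
    (-1) ^ n * ∑ m ∈ range (n + 1), (-1) ^ m * d m ∈ Set.Icc 0 (d n) := by
  induction n with
  | zero => simpa using hd0
  | succ n ih =>
    obtain ⟨hlow, hup⟩ := ih fun m hm ↦ hd m (hm.trans n.lt_succ_self)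
    have hsucc : (-1) ^ (n + 1) * ∑ m ∈ range (n + 1 + 1), (-1) ^ m * d m =
        d (n + 1) - (-1) ^ n * ∑ m ∈ range (n + 1), (-1) ^ m * d m := by
      rw [sum_range_succ, mul_add, ← mul_assoc, ← pow_add, Even.neg_one_pow ⟨n + 1, rfl⟩]
      ring
    rw [hsucc]
    exact ⟨by linarith [hd n n.lt_succ_self], by linarith⟩

theorem sub_sub_le_neg_one_pow_mul_sum {d : ℕ → ℝ} (hd0 : ∀ m, 0 ≤ d m) {k n : ℕ}
    (hmono : ∀ m < k, d m ≤ d (m + 1)) (hanti : ∀ m > k + 1, d (m + 1) ≤ d m) :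
    d (k + 1) - d k - d (k + 2) ≤
      (-1) ^ (k + 1) * ∑ m ∈ range (k + 2 + n), (-1) ^ m * d m := by
  have hlow := (neg_one_pow_mul_sum_mem_Icc_of_monotone (hd0 0) hmono).2
  have hup := (sum_neg_one_pow_mul_mem_Icc_of_antitone (d := fun m ↦ d (k + 2 + m))
    (fun m ↦ hd0 _) (fun m ↦ hanti _ (by lia)) n).2
  have hsign : (-1 : ℝ) ^ k * (-1) ^ k = 1 := by rw [← pow_add, Even.neg_one_pow ⟨k, rfl⟩]
  have hsplit : (-1) ^ (k + 1) * ∑ m ∈ range (k + 2 + n), (-1) ^ m * d m =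
      d (k + 1) - (-1) ^ k * ∑ m ∈ range (k + 1), (-1) ^ m * d m -
        ∑ m ∈ range n, (-1) ^ m * d (k + 2 + m) := by
    rw [sum_range_add, sum_range_succ]
    simp only [pow_add, mul_assoc, ← mul_sum]
    linear_combination (d (k + 1) - ∑ m ∈ range n, (-1) ^ m * d (k + 2 + m)) * hsign
  rw [hsplit]
  simp only [add_zero] at hup
  linarith

/-- The points `0, 2 b₀ / b₁, 2 b₁ / b₂, …`, which separate the zeros of `∑ (-1) ^ m b m x ^ m`
under Hutchinson's condition `b (m + 1) ^ 2 > 4 b m b (m + 2)`. -/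
noncomputable def hutchinsonPoint (b : ℕ → ℝ) : ℕ → ℝ
  | 0 => 0
  | k + 1 => 2 * b k / b (k + 1)

variable {b : ℕ → ℝ}

theorem four_mul_hutchinsonPoint_lt (hb : ∀ m, 0 < b m)
    (hb4 : ∀ m, 4 * (b m * b (m + 2)) < b (m + 1) ^ 2) (k : ℕ) :
    4 * hutchinsonPoint b (k + 1) < hutchinsonPoint b (k + 2) := by
  rw [hutchinsonPoint, hutchinsonPoint, ← mul_div_assoc, div_lt_div_iff₀ (hb _) (hb _)]
  nlinarith [hb4 k]

theorem hutchinsonPoint_pos (hb : ∀ m, 0 < b m) (k : ℕ) : 0 < hutchinsonPoint b (k + 1) :=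
  div_pos (mul_pos two_pos (hb _)) (hb _)

theorem strictMono_hutchinsonPoint (hb : ∀ m, 0 < b m)
    (hb4 : ∀ m, 4 * (b m * b (m + 2)) < b (m + 1) ^ 2) : StrictMono (hutchinsonPoint b) := by
  refine strictMono_nat_of_lt_succ fun k ↦ ?_
  rcases k with _ | k
  · exact hutchinsonPoint_pos hb 0
  · linarith [four_mul_hutchinsonPoint_lt hb hb4 k, hutchinsonPoint_pos hb k]

theorem exists_pos_le_neg_one_pow_mul_sum_hutchinsonPoint (hb : ∀ m, 0 < b m)
    (hb4 : ∀ m, 4 * (b m * b (m + 2)) < b (m + 1) ^ 2) (k : ℕ) :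
    ∃ δ > 0, ∀ N ≥ k, δ ≤
      (-1) ^ k * ∑ m ∈ range (N + 1), (-1) ^ m * (b m * hutchinsonPoint b k ^ m) := by
  rcases k with _ | k
  · refine ⟨b 0, hb 0, fun N _ ↦ ?_⟩
    simp [hutchinsonPoint, sum_range_succ']
  set x := hutchinsonPoint b
  have hx (m : ℕ) : 0 < x (m + 1) := hutchinsonPoint_pos hb m
  have hxmono := (strictMono_hutchinsonPoint hb hb4).monotone
  set d : ℕ → ℝ := fun m ↦ b m * x (k + 1) ^ m
  have hd (m : ℕ) : 0 < d m := mul_pos (hb m) (pow_pos (hx k) m)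
  have hratio (m : ℕ) : x (m + 1) * d (m + 1) = 2 * x (k + 1) * d m := by
    have hpoint : x (m + 1) * b (m + 1) = 2 * b m := div_mul_cancel₀ _ (hb (m + 1)).ne'
    linear_combination x (k + 1) ^ (m + 1) * hpoint
  have hmono (m : ℕ) (hm : m < k) : d m ≤ d (m + 1) :=
    le_of_mul_le_mul_left (by nlinarith [hratio m, hd m, hxmono (by lia : m + 1 ≤ k + 1), hx m])
      (hx m)
  have hanti (m : ℕ) (hm : k + 1 ≤ m) : 2 * d (m + 1) < d m := by
    have hgap : 4 * x (k + 1) < x (m + 1) :=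
      (four_mul_hutchinsonPoint_lt hb hb4 k).trans_le (hxmono (by lia))
    exact lt_of_mul_lt_mul_left (by nlinarith [hratio m, hd m]) (hx m).le
  have hk : d (k + 1) = 2 * d k := mul_left_cancel₀ (hx k).ne' (by linear_combination hratio k)
  refine ⟨d (k + 1) - d k - d (k + 2), by linarith [hanti (k + 1) le_rfl], fun N hN ↦ ?_⟩
  obtain ⟨n, rfl⟩ := Nat.exists_eq_add_of_le hN
  rw [show k + 1 + n + 1 = k + 2 + n by lia]
  exact sub_sub_le_neg_one_pow_mul_sum (fun m ↦ (hd m).le) hmono fun m hm ↦ by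
    linarith [hanti m hm.le, hd (m + 1)]

theorem exists_root_mem_Ioo_of_neg_one_pow_mul_pos {f : ℝ → ℝ} (hf : Continuous f) {x y : ℝ}
    (hxy : x < y) {k : ℕ} (hx : 0 < (-1) ^ k * f x) (hy : 0 < (-1) ^ (k + 1) * f y) :
    ∃ r ∈ Set.Ioo x y, f r = 0 := by
  rw [pow_succ] at hy
  have hIVT := intermediate_value_Ioo' hxy.le (hf.const_mul ((-1 : ℝ) ^ k)).continuousOn
  obtain ⟨r, hr, hr0⟩ := hIVT ⟨by linarith, hx⟩
  exact ⟨r, hr, by simpa using hr0⟩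

theorem IsRecipRoots.of_strictMonoOn {P : ℝ[X]} {N : ℕ} (hdeg : P.natDegree ≤ N)
    (h0 : P.eval 0 = 1) {r : ℕ → ℝ} (hmono : StrictMonoOn r (range N)) (hpos : ∀ k < N, 0 < r k)
    (hroot : ∀ k < N, P.eval (r k) = 0) :
    IsRecipRoots P fun k ↦ if k < N then (r k)⁻¹ else 0 := by
  refine ⟨antitone_nat_of_succ_le fun k ↦ ?_, N, fun k hk ↦ if_neg (by simpa using hk), ?_⟩
  · by_cases hk : k + 1 < N
    · rw [if_pos hk, if_pos (by lia)]
      exact inv_anti₀ (hpos k (by lia)) (hmono (by simp; lia) (by simpa) k.lt_succ_self).le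
    · rw [if_neg hk]
      split_ifs with hk'
      exacts [(inv_pos.2 (hpos k hk')).le, le_rfl]
  · have hP := eq_prod_one_sub_of_isRoot (s := (range N).image r)
      (by rwa [card_image_of_injOn hmono.injOn, card_range]) h0 fun y hy ↦ by
        obtain ⟨k, hk, rfl⟩ := mem_image.1 hy
        exact ⟨(hpos k (mem_range.1 hk)).ne', hroot k (mem_range.1 hk)⟩
    rw [prod_image hmono.injOn] at hP
    exact hP.trans (prod_congr rfl fun k hk ↦ by rw [if_pos (mem_range.1 hk)])

theorem exists_isRecipRoots_of_alternating {P : ℝ[X]} {N : ℕ} (hdeg : P.natDegree ≤ N)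
    (h0 : P.eval 0 = 1) {x : ℕ → ℝ} (hx0 : 0 ≤ x 0) (hx : StrictMono x)
    (hsign : ∀ k ≤ N, 0 < (-1) ^ k * P.eval (x k)) :
    ∃ a, IsRecipRoots P a ∧ ∀ k < N, a k * x k ≤ 1 ∧ 1 ≤ a k * x (k + 1) := by
  have hroot (k : ℕ) (hk : k < N) : ∃ r ∈ Set.Ioo (x k) (x (k + 1)), P.eval r = 0 :=
    exists_root_mem_Ioo_of_neg_one_pow_mul_pos P.continuous (hx k.lt_succ_self)
      (hsign k hk.le) (hsign (k + 1) hk)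
  choose! r hrx hr using hroot
  have hpos (k : ℕ) (hk : k < N) : 0 < r k :=
    (hx0.trans (hx.monotone k.zero_le)).trans_lt (hrx k hk).1
  have hmono : StrictMonoOn r (range N) := by
    intro i hi j hj hij
    rw [coe_range, Set.mem_Iio] at hi hj
    exact ((hrx i hi).2.trans_le (hx.monotone hij)).trans (hrx j hj).1
  refine ⟨_, .of_strictMonoOn hdeg h0 hmono hpos hr, fun k hk ↦ ?_⟩
  simp only [if_pos hk, inv_mul_le_one₀ (hpos k hk), one_le_inv_mul₀ (hpos k hk)]
  exact ⟨(hrx k hk).1.le, (hrx k hk).2.le⟩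

theorem hasSimpleRecipZeros_of_alternating {P : ℕ → ℝ[X]} {c x : ℕ → ℝ} {K ρ : ℝ}
    (h : DominatedLimit P c (superGeom K ρ)) (hρ0 : 0 ≤ ρ) (hρ1 : ρ < 1)
    (hdeg : ∀ N, (P N).natDegree ≤ N) (h0 : ∀ N, (P N).eval 0 = 1) (hx0 : 0 ≤ x 0)
    (hx : StrictMono x) (hsign : ∀ k, ∃ δ > 0, ∀ N ≥ k, δ ≤ (-1) ^ k * (P N).eval (x k)) :
    HasSimpleRecipZeros c := by
  choose δ hδ hsign using hsign
  choose a ha hax using fun N ↦ exists_isRecipRoots_of_alternating (hdeg N) (h0 N) hx0 hx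
    fun k hk ↦ (hδ k).trans_le (hsign k N hk)
  obtain ⟨u, φ, hφ, hu, hc⟩ := exists_hasRecipZeros_of_tendsto h hρ0 hρ1 ha
  have hlt (k : ℕ) : ∀ᶠ N in atTop, k < φ N := hφ.tendsto_atTop.eventually_gt_atTop k
  have hupper (k : ℕ) : u k * x k ≤ 1 :=
    le_of_tendsto ((hu k).mul_const _) ((hlt k).mono fun N hN ↦ (hax _ k hN).1)
  have hlower (k : ℕ) : 1 ≤ u k * x (k + 1) :=
    ge_of_tendsto ((hu k).mul_const _) ((hlt k).mono fun N hN ↦ (hax _ k hN).2)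
  have hne (k : ℕ) : seriesSum c (x k) ≠ 0 := fun hzero ↦ by
    have hδk : δ k ≤ (-1) ^ k * seriesSum c (x k) :=
      ge_of_tendsto ((h.tendsto_eval (x k)).const_mul _)
        ((eventually_ge_atTop k).mono fun N hN ↦ hsign k N hN)
    rw [hzero, mul_zero] at hδk
    exact (hδ k).not_ge hδk
  have hanti : StrictAnti u := by
    refine strictAnti_nat_of_succ_lt fun k ↦ lt_of_mul_lt_mul_right ?_
      (hx0.trans (hx.monotone (k + 1).zero_le))
    exact (hupper (k + 1)).trans_lt
      ((hlower k).lt_of_ne' fun heq ↦ hne (k + 1) (hc.seriesSum_eq_zero_iff.2 ⟨k, heq⟩))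
  exact ⟨u, hc, hanti.injective.injOn⟩

theorem hasSimpleRecipZeros_of_hutchinson (hb0 : b 0 = 1) (hb : ∀ m, 0 < b m)
    (hb4 : ∀ m, 4 * (b m * b (m + 2)) < b (m + 1) ^ 2) {K ρ : ℝ} (hρ0 : 0 ≤ ρ) (hρ1 : ρ < 1)
    (hbound : ∀ m, b m ≤ superGeom K ρ m) : HasSimpleRecipZeros fun m ↦ (-1) ^ m * b m := by
  refine hasSimpleRecipZeros_of_alternating (x := hutchinsonPoint b)
    (dominatedLimit_trunc (isEntireSeq_superGeom K (by rwa [abs_of_nonneg hρ0])) fun m ↦ ?_)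
    hρ0 hρ1 (fun N ↦ Nat.lt_succ_iff.1 (PowerSeries.natDegree_trunc_lt _ N)) (fun N ↦ ?_) le_rfl
    (strictMono_hutchinsonPoint hb hb4) fun k ↦ ?_
  · simpa [abs_mul, abs_of_pos (hb m)] using hbound m
  · simp [← coeff_zero_eq_eval_zero, PowerSeries.coeff_trunc, hb0]
  · obtain ⟨δ, hδ, hle⟩ := exists_pos_le_neg_one_pow_mul_sum_hutchinsonPoint hb hb4 k
    refine ⟨δ, hδ, fun N hN ↦ (hle N hN).trans_eq ?_⟩
    simp only [eval, PowerSeries.eval₂_trunc_eq_sum_range, PowerSeries.coeff_mk, RingHom.id_apply,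
      mul_assoc]

end Hutchinson

section MittagLefflerCoeff

/-- The finite `q`-Pochhammer symbol `(a; q)_n`. -/
def qPoch (a q : ℝ) (n : ℕ) : ℝ := ∏ i ∈ range n, (1 - a * q ^ i)

/-- The coefficients `s ^ m q ^ (m (m - 1)) / (a; q)_{2m}`. Up to a constant factor, they are the
absolute values of the coefficients of `λ_{γ,σ}(z; q)` as a power series in `z ^ 2`, for
`a = q ^ (γ + 1)` and `s = σ ^ 2 (1 - q) ^ 2`. -/
noncomputable def qMLCoeff (q s a : ℝ) (m : ℕ) : ℝ := superGeom s q m / qPoch a q (2 * m)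

theorem superGeom_succ (K ρ : ℝ) (m : ℕ) :
    superGeom K ρ (m + 1) = K * ρ ^ (2 * m) * superGeom K ρ m := by
  have hexp : (m + 1) * (m + 1 - 1) = 2 * m + m * (m - 1) := by
    cases m
    · rfl
    · simp only [Nat.add_sub_cancel]
      ring
  rw [superGeom, superGeom, hexp]
  ring

theorem qPoch_succ (a q : ℝ) (n : ℕ) : qPoch a q (n + 1) = qPoch a q n * (1 - a * q ^ n) :=
  prod_range_succ _ _

theorem qPoch_succ' (a q : ℝ) (n : ℕ) : qPoch a q (n + 1) = (1 - a) * qPoch (a * q) q n := by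
  rw [qPoch, prod_range_succ', pow_zero, mul_one, mul_comm, qPoch]
  exact congrArg _ (prod_congr rfl fun i _ ↦ by ring)

theorem qMLCoeff_zero (q s a : ℝ) : qMLCoeff q s a 0 = 1 := by simp [qMLCoeff, superGeom, qPoch]

variable {q s a : ℝ}

theorem one_sub_le_one_sub_mul_pow (hq0 : 0 ≤ q) (hq1 : q ≤ 1) (ha0 : 0 ≤ a) (i : ℕ) :
    1 - a ≤ 1 - a * q ^ i :=
  sub_le_sub_left (mul_le_of_le_one_right ha0 (pow_le_one₀ hq0 hq1)) 1

theorem one_sub_pow_le_qPoch (hq0 : 0 ≤ q) (hq1 : q ≤ 1) (ha0 : 0 ≤ a) (ha1 : a < 1) (n : ℕ) :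
    (1 - a) ^ n ≤ qPoch a q n := by
  calc (1 - a) ^ n = ∏ _i ∈ range n, (1 - a) := by simp
    _ ≤ qPoch a q n := prod_le_prod (fun _ _ ↦ (sub_pos.2 ha1).le)
        fun i _ ↦ one_sub_le_one_sub_mul_pow hq0 hq1 ha0 i

theorem qPoch_pos (hq0 : 0 ≤ q) (hq1 : q ≤ 1) (ha0 : 0 ≤ a) (ha1 : a < 1) (n : ℕ) :
    0 < qPoch a q n :=
  (pow_pos (sub_pos.2 ha1) n).trans_le (one_sub_pow_le_qPoch hq0 hq1 ha0 ha1 n)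

theorem qMLCoeff_pos (hq0 : 0 < q) (hq1 : q ≤ 1) (hs : 0 < s) (ha0 : 0 ≤ a) (ha1 : a < 1) (m : ℕ) :
    0 < qMLCoeff q s a m :=
  div_pos (mul_pos (pow_pos hs _) (pow_pos hq0 _)) (qPoch_pos hq0.le hq1 ha0 ha1 _)

theorem qMLCoeff_le_superGeom (hq0 : 0 ≤ q) (hq1 : q ≤ 1) (hs : 0 ≤ s) (ha0 : 0 ≤ a) (ha1 : a < 1)
    (m : ℕ) : qMLCoeff q s a m ≤ superGeom (s / (1 - a) ^ 2) q m := by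
  have hpow : 0 < (1 - a) ^ (2 * m) := pow_pos (sub_pos.2 ha1) _
  calc qMLCoeff q s a m ≤ superGeom s q m / (1 - a) ^ (2 * m) :=
        div_le_div_of_nonneg_left (mul_nonneg (pow_nonneg hs _) (pow_nonneg hq0 _)) hpow
          (one_sub_pow_le_qPoch hq0 hq1 ha0 ha1 _)
    _ = superGeom (s / (1 - a) ^ 2) q m := by
        rw [superGeom, superGeom, div_pow, ← pow_mul]
        ring

theorem one_sub_mul_qMLCoeff_shift (hq0 : 0 ≤ q) (hq1 : q ≤ 1) (ha0 : 0 ≤ a) (ha1 : a < 1) (m : ℕ) :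
    (1 - a * q ^ (2 * m)) * qMLCoeff q s (a * q) m = (1 - a) * qMLCoeff q s a m := by
  have hshift := (qPoch_succ' a q (2 * m)).symm.trans (qPoch_succ a q (2 * m))
  have haq : a * q < 1 := (mul_le_of_le_one_right ha0 hq1).trans_lt ha1
  rw [qMLCoeff, qMLCoeff, mul_div_assoc', mul_div_assoc',
    div_eq_div_iff (qPoch_pos hq0 hq1 (by positivity) haq _).ne'
      (qPoch_pos hq0 hq1 ha0 ha1 _).ne']
  linear_combination -superGeom s q m * hshift

theorem one_sub_mul_qMLCoeff_succ (hq0 : 0 ≤ q) (hq1 : q ≤ 1) (ha0 : 0 ≤ a) (ha1 : a < 1) (m : ℕ) :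
    (1 - a) * (1 - a * q ^ (2 * m + 1)) * qMLCoeff q s a (m + 1) =
      s * q ^ (2 * m) * qMLCoeff q s (a * q) m := by
  have hsucc : qPoch a q (2 * (m + 1)) =
      (1 - a) * (1 - a * q ^ (2 * m + 1)) * qPoch (a * q) q (2 * m) := by
    rw [Nat.mul_succ, qPoch_succ', qPoch_succ]
    ring
  have hne := (qPoch_pos hq0 hq1 ha0 ha1 (2 * (m + 1))).ne'
  rw [hsucc] at hne
  rw [qMLCoeff, qMLCoeff, hsucc, superGeom_succ, mul_div_assoc', mul_div_assoc',
    mul_div_mul_left _ _ (left_ne_zero_of_mul hne)]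

theorem qMLCoeff_mul_le_sq (hq0 : 0 < q) (hq1 : q ≤ 1) (hs : 0 < s) (ha0 : 0 ≤ a) (ha1 : a < 1)
    (m : ℕ) : qMLCoeff q s a m * qMLCoeff q s a (m + 2) ≤ q ^ 2 * qMLCoeff q s a (m + 1) ^ 2 := by
  have hfactor (i : ℕ) : 0 < 1 - a * q ^ i :=
    (sub_pos.2 ha1).trans_le (one_sub_le_one_sub_mul_pow hq0.le hq1 ha0 i)
  have hanti (i : ℕ) : 1 - a * q ^ i ≤ 1 - a * q ^ (i + 2) := by
    rw [pow_add, ← mul_assoc]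
    have := pow_le_one₀ hq0.le hq1 (n := 2)
    nlinarith [mul_nonneg ha0 (pow_pos hq0 i).le]
  set A : ℕ → ℝ := fun m ↦ (1 - a * q ^ (2 * m)) * (1 - a * q ^ (2 * m + 1))
  have hA (m : ℕ) : 0 < A m := mul_pos (hfactor _) (hfactor _)
  have hrec (m : ℕ) : A m * qMLCoeff q s a (m + 1) = s * q ^ (2 * m) * qMLCoeff q s a m := by
    have hpoch : qPoch a q (2 * (m + 1)) = A m * qPoch a q (2 * m) := by
      rw [Nat.mul_succ, qPoch_succ, qPoch_succ]
      ring
    rw [qMLCoeff, qMLCoeff, hpoch, superGeom_succ, mul_div_assoc', mul_div_mul_left _ _ (hA m).ne',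
      mul_div_assoc]
  have hs_pow : s * q ^ (2 * m) ≠ 0 := by positivity
  refine le_of_mul_le_mul_left ?_ (hA (m + 1))
  calc A (m + 1) * (qMLCoeff q s a m * qMLCoeff q s a (m + 2))
      = A m * (q ^ 2 * qMLCoeff q s a (m + 1) ^ 2) := by
        refine mul_left_cancel₀ hs_pow ?_
        linear_combination s * q ^ (2 * m) * qMLCoeff q s a m * hrec (m + 1) -
          s * q ^ (2 * m) * q ^ 2 * qMLCoeff q s a (m + 1) * hrec m
    _ ≤ A (m + 1) * (q ^ 2 * qMLCoeff q s a (m + 1) ^ 2) :=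
        mul_le_mul_of_nonneg_right
          (mul_le_mul (hanti _) (hanti _) (hfactor _).le (hfactor _).le) (by positivity)

theorem hasSimpleRecipZeros_eulerSeq_qMLCoeff_of_le_half (hq0 : 0 < q) (hq1 : q ≤ 1 / 2)
    (hs : 0 < s) (ha0 : 0 ≤ a) (ha1 : a < 1) {τ : ℝ} (hτ : 0 < τ) :
    HasSimpleRecipZeros (eulerSeq τ fun m ↦ (-1) ^ m * qMLCoeff q s a m) := by
  have hml (m : ℕ) := qMLCoeff_pos hq0 (by linarith) hs ha0 ha1 m
  have heuler : (eulerSeq τ fun m ↦ (-1) ^ m * qMLCoeff q s a m) =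
      fun m ↦ (-1) ^ m * eulerSeq τ (qMLCoeff q s a) m := funext fun m ↦ mul_left_comm _ _ _
  rw [heuler]
  refine hasSimpleRecipZeros_of_hutchinson (K := (1 + τ) * (s / (1 - a) ^ 2))
    (by simp [eulerSeq, qMLCoeff_zero]) (fun m ↦ mul_pos (by positivity) (hml m)) (fun m ↦ ?_)
    hq0.le (by linarith) fun m ↦ ?_
  · have hconcave := qMLCoeff_mul_le_sq hq0 (by linarith) hs ha0 ha1 m
    have hq4 : 4 * q ^ 2 ≤ 1 := by nlinarith
    have hsq : qMLCoeff q s a (m + 1) ^ 2 > 0 := pow_pos (hml _) 2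
    simp only [eulerSeq]
    push_cast
    calc 4 * ((1 + τ * m) * qMLCoeff q s a m * ((1 + τ * (m + 2)) * qMLCoeff q s a (m + 2)))
        = 4 * ((1 + τ * m) * (1 + τ * (m + 2))) *
            (qMLCoeff q s a m * qMLCoeff q s a (m + 2)) := by ring
      _ ≤ 4 * ((1 + τ * m) * (1 + τ * (m + 2))) * (q ^ 2 * qMLCoeff q s a (m + 1) ^ 2) := by gcongr
      _ ≤ (1 + τ * m) * (1 + τ * (m + 2)) * qMLCoeff q s a (m + 1) ^ 2 := by
        rw [mul_comm 4, mul_assoc _ 4, ← mul_assoc 4]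
        exact mul_le_mul_of_nonneg_left (mul_le_of_le_one_left hsq.le hq4) (by positivity)
      _ < ((1 + τ * (m + 1)) * qMLCoeff q s a (m + 1)) ^ 2 := by
        rw [mul_pow]
        refine mul_lt_mul_of_pos_right ?_ hsq
        linarith [pow_pos hτ 2]
  · refine (le_abs_self _).trans (abs_eulerSeq_le_superGeom hτ.le ?_)
    rw [abs_of_pos (hml m)]
    exact qMLCoeff_le_superGeom hq0.le (by linarith) hs.le ha0 ha1 m

end MittagLefflerCoeff

section QTrigPoly

/-- Polynomial approximants `(c, t)` for which `c (z ^ 2)` and `z * t (z ^ 2)` behave like a cosine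
and a sine: they arise from `(1, z)` by iterating `q`-difference analogues of the addition
formulas. -/
noncomputable def qTrigPoly (q κ : ℝ) : ℕ → ℝ[X] × ℝ[X]
  | 0 => (1, 1)
  | N + 1 =>
    let c := (qTrigPoly q κ N).1.comp (C (q ^ 2) * X) -
      C κ * (X * (qTrigPoly q κ N).2.comp (C (q ^ 2) * X))
    (c, C q * (qTrigPoly q κ N).2.comp (C (q ^ 2) * X) + C (1 - q) * c)

/-- The cosine-like component of `qTrigPoly`. -/
noncomputable def qCosPoly (q κ : ℝ) (N : ℕ) : ℝ[X] := (qTrigPoly q κ N).1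

/-- The sine-like component of `qTrigPoly`, with the odd factor `z` removed. -/
noncomputable def qSinPoly (q κ : ℝ) (N : ℕ) : ℝ[X] := (qTrigPoly q κ N).2

theorem qCosPoly_succ (q κ : ℝ) (N : ℕ) : qCosPoly q κ (N + 1) =
    (qCosPoly q κ N).comp (C (q ^ 2) * X) -
      C κ * (X * (qSinPoly q κ N).comp (C (q ^ 2) * X)) := rfl

theorem qSinPoly_succ (q κ : ℝ) (N : ℕ) : qSinPoly q κ (N + 1) =
    C q * (qSinPoly q κ N).comp (C (q ^ 2) * X) + C (1 - q) * qCosPoly q κ (N + 1) := rfl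

theorem coeff_zero_qCosPoly (q κ : ℝ) (N : ℕ) : (qCosPoly q κ N).coeff 0 = 1 := by
  induction N with
  | zero => exact coeff_one_zero
  | succ N ih =>
    rw [qCosPoly_succ, coeff_sub, comp_C_mul_X_coeff, ih]
    simp

theorem coeff_zero_qSinPoly (q κ : ℝ) (N : ℕ) : (qSinPoly q κ N).coeff 0 = 1 := by
  induction N with
  | zero => exact coeff_one_zero
  | succ N ih =>
    rw [qSinPoly_succ, coeff_add, coeff_C_mul, coeff_C_mul, comp_C_mul_X_coeff, ih,
      coeff_zero_qCosPoly]
    ring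

theorem coeff_succ_qCosPoly_succ (q κ : ℝ) (N m : ℕ) : (qCosPoly q κ (N + 1)).coeff (m + 1) =
    q ^ (2 * m + 2) * (qCosPoly q κ N).coeff (m + 1) -
      κ * q ^ (2 * m) * (qSinPoly q κ N).coeff m := by
  rw [qCosPoly_succ, coeff_sub, coeff_C_mul, coeff_X_mul, comp_C_mul_X_coeff, comp_C_mul_X_coeff]
  ring

theorem coeff_qSinPoly_succ (q κ : ℝ) (N m : ℕ) : (qSinPoly q κ (N + 1)).coeff m =
    q ^ (2 * m + 1) * (qSinPoly q κ N).coeff m + (1 - q) * (qCosPoly q κ (N + 1)).coeff m := by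
  rw [qSinPoly_succ, coeff_add, coeff_C_mul, coeff_C_mul, comp_C_mul_X_coeff]
  ring

end QTrigPoly

section HermiteBiehler

theorem posRooted_of_forall_aeval_sq_ne_zero {P : ℝ[X]} (hP : P.coeff 0 ≠ 0)
    (h : ∀ z : ℂ, 0 < z.im → aeval (z ^ 2) P ≠ 0) : PosRooted P := by
  intro w hw
  obtain ⟨z, rfl⟩ := IsAlgClosed.exists_pow_nat_eq w two_pos
  rcases lt_trichotomy z.im 0 with hneg | hzero | hpos
  · exact absurd (by rwa [neg_sq]) (h (-z) (by simpa using hneg))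
  · have hz : z = (z.re : ℂ) := Complex.ext rfl (by simpa using hzero)
    refine ⟨z.re ^ 2, sq_pos_of_ne_zero fun hre ↦ hP ?_, by rw [Complex.ofReal_pow, ← hz]⟩
    rw [hz, hre, Complex.ofReal_zero, zero_pow two_ne_zero, ← coeff_zero_eq_aeval_zero'] at hw
    simpa using hw
  · exact absurd hw (h z hpos)

variable {q κ : ℝ}

theorem im_mul_qSinPoly_mul_conj_qCosPoly_pos (hq0 : 0 < q) (hq1 : q ≤ 1) (hκ : 0 ≤ κ) (N : ℕ)
    {z : ℂ} (hz : 0 < z.im) :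
    0 < (z * aeval (z ^ 2) (qSinPoly q κ N) *
      (starRingEnd ℂ) (aeval (z ^ 2) (qCosPoly q κ N))).im := by
  induction N generalizing z with
  | zero => simpa [qSinPoly, qCosPoly, qTrigPoly] using hz
  | succ N ih =>
    have hih := ih (z := q * z) (by simpa using mul_pos hq0 hz)
    have hscale : (q : ℂ) ^ 2 * z ^ 2 = (q * z) ^ 2 := by ring
    set c := aeval ((q * z) ^ 2) (qCosPoly q κ N)
    set t := aeval ((q * z) ^ 2) (qSinPoly q κ N)
    have hcos : aeval (z ^ 2) (qCosPoly q κ (N + 1)) = c - κ * (z ^ 2 * t) := by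
      simp [qCosPoly_succ, aeval_comp, hscale, c, t]
    have hsin : aeval (z ^ 2) (qSinPoly q κ (N + 1)) = q * t + (1 - q) * (c - κ * (z ^ 2 * t)) := by
      simp [qSinPoly_succ, hcos, aeval_comp, hscale, t]
    rw [hsin, hcos]
    have hidentity : (z * (q * t + (1 - q) * (c - κ * (z ^ 2 * t))) *
        (starRingEnd ℂ) (c - κ * (z ^ 2 * t))).im =
          (q * z * t * (starRingEnd ℂ) c).im +
            (1 - q) * Complex.normSq (c - κ * (z ^ 2 * t)) * z.im +
            q * κ * Complex.normSq t * Complex.normSq z * z.im := by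
      simp only [Complex.normSq_apply, Complex.mul_im, Complex.mul_re, Complex.add_im,
        Complex.add_re, Complex.sub_im, Complex.sub_re, Complex.conj_im, Complex.conj_re,
        Complex.ofReal_im, Complex.ofReal_re, Complex.one_re, Complex.one_im, sq]
      ring
    rw [hidentity]
    have := sub_nonneg.2 hq1
    have := Complex.normSq_nonneg (c - κ * (z ^ 2 * t))
    have := Complex.normSq_nonneg t
    have := Complex.normSq_nonneg z
    positivity

theorem posRooted_qCosPoly (hq0 : 0 < q) (hq1 : q ≤ 1) (hκ : 0 ≤ κ) (N : ℕ) :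
    PosRooted (qCosPoly q κ N) :=
  posRooted_of_forall_aeval_sq_ne_zero (by simp [coeff_zero_qCosPoly]) fun z hz h0 ↦ by
    simpa [h0] using im_mul_qSinPoly_mul_conj_qCosPoly_pos hq0 hq1 hκ N hz

theorem posRooted_qSinPoly (hq0 : 0 < q) (hq1 : q ≤ 1) (hκ : 0 ≤ κ) (N : ℕ) :
    PosRooted (qSinPoly q κ N) :=
  posRooted_of_forall_aeval_sq_ne_zero (by simp [coeff_zero_qSinPoly]) fun z hz h0 ↦ by
    simpa [h0] using im_mul_qSinPoly_mul_conj_qCosPoly_pos hq0 hq1 hκ N hz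

end HermiteBiehler

section QTrigLimit

theorem tendsto_of_affine_recurrence {x y : ℕ → ℝ} {r Y L : ℝ} (hr : |r| < 1)
    (hrec : ∀ N, x (N + 1) = r * x N + y N) (hy : Tendsto y atTop (𝓝 Y)) (hL : L = r * L + Y) :
    Tendsto x atTop (𝓝 L) := by
  rw [Metric.tendsto_atTop] at hy ⊢
  intro ε hε
  obtain ⟨N₀, hN₀⟩ := hy ((1 - |r|) * (ε / 2)) (mul_pos (sub_pos.2 hr) (half_pos hε))
  have hstep (k : ℕ) : |x (N₀ + k) - L| ≤ |r| ^ k * |x N₀ - L| + ε / 2 := by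
    induction k with
    | zero => simpa using (half_pos hε).le
    | succ k ih =>
      have hsplit : x (N₀ + (k + 1)) - L = r * (x (N₀ + k) - L) + (y (N₀ + k) - Y) := by
        rw [← add_assoc, hrec]
        linear_combination -hL
      calc |x (N₀ + (k + 1)) - L| ≤ |r| * |x (N₀ + k) - L| + |y (N₀ + k) - Y| := by
            rw [hsplit, ← abs_mul]
            exact abs_add_le _ _
        _ ≤ |r| * (|r| ^ k * |x N₀ - L| + ε / 2) + (1 - |r|) * (ε / 2) :=
            add_le_add (mul_le_mul_of_nonneg_left ih (abs_nonneg r)) (hN₀ _ (by lia)).le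
        _ = |r| ^ (k + 1) * |x N₀ - L| + ε / 2 := by ring
  have hdecay : Tendsto (fun k ↦ |r| ^ k * |x N₀ - L|) atTop (𝓝 0) := by
    simpa using (tendsto_pow_atTop_nhds_zero_of_lt_one (abs_nonneg r) hr).mul_const |x N₀ - L|
  obtain ⟨k₀, hk₀⟩ := eventually_atTop.1 (hdecay.eventually (gt_mem_nhds (half_pos hε)))
  refine ⟨N₀ + k₀, fun N hN ↦ ?_⟩
  obtain ⟨k, rfl⟩ := Nat.exists_eq_add_of_le (show N₀ ≤ N by lia)
  rw [Real.dist_eq]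
  linarith [hstep k, hk₀ k (by lia)]

variable {q s : ℝ}

theorem qMLCoeff_self_succ_eq (hq0 : 0 ≤ q) (hq1 : q < 1) (m : ℕ) :
    qMLCoeff q s q (m + 1) =
      q ^ (2 * m + 2) * qMLCoeff q s q (m + 1) +
        s / (1 - q) * q ^ (2 * m) * qMLCoeff q s (q * q) m := by
  rw [div_mul_eq_mul_div, div_mul_eq_mul_div, ← one_sub_mul_qMLCoeff_succ hq0 hq1.le hq0 hq1,
    mul_assoc (1 - q), mul_div_cancel_left₀ _ (sub_pos.2 hq1).ne']
  ring

theorem qMLCoeff_self_mul_self_eq (hq0 : 0 ≤ q) (hq1 : q < 1) (m : ℕ) :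
    qMLCoeff q s (q * q) m =
      q ^ (2 * m + 1) * qMLCoeff q s (q * q) m + (1 - q) * qMLCoeff q s q m := by
  linear_combination one_sub_mul_qMLCoeff_shift (s := s) hq0 hq1.le hq0 hq1 m

theorem abs_coeff_qTrigPoly_le (hq0 : 0 < q) (hq1 : q < 1) (hs : 0 < s) (N m : ℕ) :
    |(qCosPoly q (s / (1 - q)) N).coeff m| ≤ qMLCoeff q s q m ∧
      |(qSinPoly q (s / (1 - q)) N).coeff m| ≤ qMLCoeff q s (q * q) m := by
  have hq1' : 0 < 1 - q := sub_pos.2 hq1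
  have hκ : 0 < s / (1 - q) := div_pos hs hq1'
  have hqq : q * q < 1 := mul_lt_one_of_nonneg_of_lt_one_left hq0.le hq1 hq1.le
  induction N generalizing m with
  | zero =>
    have hc := (qMLCoeff_pos hq0 hq1.le hs hq0.le hq1 m).le
    have ht := (qMLCoeff_pos hq0 hq1.le hs (by positivity) hqq m).le
    cases m <;> simp_all [qCosPoly, qSinPoly, qTrigPoly, qMLCoeff_zero, coeff_one]
  | succ N ih =>
    have hcos : |(qCosPoly q (s / (1 - q)) (N + 1)).coeff m| ≤ qMLCoeff q s q m := by
      rcases m with _ | m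
      · simp [coeff_zero_qCosPoly, qMLCoeff_zero]
      · rw [coeff_succ_qCosPoly_succ, qMLCoeff_self_succ_eq hq0.le hq1]
        refine (abs_sub _ _).trans ?_
        rw [abs_mul, abs_mul, abs_of_pos (pow_pos hq0 _), abs_of_pos (mul_pos hκ (pow_pos hq0 _))]
        gcongr
        exacts [(ih _).1, (ih _).2]
    refine ⟨hcos, ?_⟩
    rw [coeff_qSinPoly_succ, qMLCoeff_self_mul_self_eq hq0.le hq1]
    refine (abs_add_le _ _).trans ?_
    rw [abs_mul, abs_mul, abs_of_pos (pow_pos hq0 _), abs_of_pos hq1']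
    gcongr
    exact (ih m).2

theorem tendsto_coeff_qSinPoly_of_tendsto_coeff_qCosPoly (hq0 : 0 < q) (hq1 : q < 1) {m : ℕ}
    (h : Tendsto (fun N ↦ (qCosPoly q (s / (1 - q)) N).coeff m) atTop
      (𝓝 ((-1) ^ m * qMLCoeff q s q m))) :
    Tendsto (fun N ↦ (qSinPoly q (s / (1 - q)) N).coeff m) atTop
      (𝓝 ((-1) ^ m * qMLCoeff q s (q * q) m)) := by
  refine tendsto_of_affine_recurrence (r := q ^ (2 * m + 1)) ?_ (coeff_qSinPoly_succ _ _ · m)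
    ((h.comp (tendsto_add_atTop_nat 1)).const_mul (1 - q)) ?_
  · rw [abs_of_pos (by positivity)]
    exact pow_lt_one₀ hq0.le hq1 (Nat.succ_ne_zero _)
  · linear_combination (-1) ^ m * qMLCoeff_self_mul_self_eq (s := s) hq0.le hq1 m

theorem tendsto_coeff_qCosPoly (hq0 : 0 < q) (hq1 : q < 1) (m : ℕ) :
    Tendsto (fun N ↦ (qCosPoly q (s / (1 - q)) N).coeff m) atTop
      (𝓝 ((-1) ^ m * qMLCoeff q s q m)) := by
  induction m with
  | zero => simp [coeff_zero_qCosPoly, qMLCoeff_zero]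
  | succ m ih =>
    refine tendsto_of_affine_recurrence (r := q ^ (2 * m + 2)) ?_
      (fun N ↦ (coeff_succ_qCosPoly_succ _ _ N m).trans (sub_eq_add_neg _ _))
      ((tendsto_coeff_qSinPoly_of_tendsto_coeff_qCosPoly hq0 hq1 ih).const_mul _).neg ?_
    · rw [abs_of_pos (by positivity)]
      exact pow_lt_one₀ hq0.le hq1 (Nat.succ_ne_zero _)
    · linear_combination (-1) ^ (m + 1) * qMLCoeff_self_succ_eq (s := s) hq0.le hq1 m

theorem dominatedLimit_qCosPoly (hq0 : 0 < q) (hq1 : q < 1) (hs : 0 < s) :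
    DominatedLimit (qCosPoly q (s / (1 - q))) (fun m ↦ (-1) ^ m * qMLCoeff q s q m)
      (superGeom (s / (1 - q) ^ 2) q) where
  isEntireSeq_bound := isEntireSeq_superGeom _ (by rwa [abs_of_pos hq0])
  abs_coeff_le N m := (abs_coeff_qTrigPoly_le hq0 hq1 hs N m).1.trans
    (qMLCoeff_le_superGeom hq0.le hq1.le hs.le hq0.le hq1 m)
  tendsto_coeff := tendsto_coeff_qCosPoly hq0 hq1

theorem dominatedLimit_qSinPoly (hq0 : 0 < q) (hq1 : q < 1) (hs : 0 < s) :
    DominatedLimit (qSinPoly q (s / (1 - q))) (fun m ↦ (-1) ^ m * qMLCoeff q s (q * q) m)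
      (superGeom (s / (1 - q * q) ^ 2) q) where
  isEntireSeq_bound := isEntireSeq_superGeom _ (by rwa [abs_of_pos hq0])
  abs_coeff_le N m := (abs_coeff_qTrigPoly_le hq0 hq1 hs N m).2.trans
    (qMLCoeff_le_superGeom hq0.le hq1.le hs.le (by positivity)
      (mul_lt_one_of_nonneg_of_lt_one_left hq0.le hq1 hq1.le) m)
  tendsto_coeff m := tendsto_coeff_qSinPoly_of_tendsto_coeff_qCosPoly hq0 hq1
    (tendsto_coeff_qCosPoly hq0 hq1 m)

end QTrigLimit

section TrigWronskian

/-- The Wronskian of `z ↦ f (z ^ 2)` and `z ↦ z * g (z ^ 2)`, as a function of `w = z ^ 2`. -/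
noncomputable def trigWronskian (f g : ℝ → ℝ) (w : ℝ) : ℝ :=
  f w * g w + 2 * w * (f w * deriv g w - deriv f w * g w)

theorem mul_trigWronskian_le_trigWronskian_succ {q κ : ℝ} (hq0 : 0 ≤ q) (hq1 : q ≤ 1)
    (hκ : 0 ≤ κ) (N : ℕ) {w : ℝ} (hw : 0 ≤ w) :
    q * trigWronskian (qCosPoly q κ N).eval (qSinPoly q κ N).eval (q ^ 2 * w) ≤
      trigWronskian (qCosPoly q κ (N + 1)).eval (qSinPoly q κ (N + 1)).eval w := by
  have hidentity : trigWronskian (qCosPoly q κ (N + 1)).eval (qSinPoly q κ (N + 1)).eval w =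
      q * trigWronskian (qCosPoly q κ N).eval (qSinPoly q κ N).eval (q ^ 2 * w) +
        ((1 - q) * (qCosPoly q κ (N + 1)).eval w ^ 2 +
          κ * q * w * (qSinPoly q κ N).eval (q ^ 2 * w) ^ 2) := by
    simp only [trigWronskian, Polynomial.deriv]
    simp only [qSinPoly_succ, qCosPoly_succ, derivative_add, derivative_sub, derivative_mul,
      derivative_C, derivative_X, derivative_comp, eval_add, eval_sub, eval_mul, eval_zero,
      eval_one, eval_C, eval_X, eval_comp]
    ring
  rw [hidentity]
  have := sub_nonneg.2 hq1
  exact le_add_of_nonneg_right (by positivity)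

namespace DominatedLimit

variable {P Q : ℕ → ℝ[X]} {c d e f : ℕ → ℝ}

theorem tendsto_trigWronskian (hP : DominatedLimit P c e) (hQ : DominatedLimit Q d f) (w : ℝ) :
    Tendsto (fun N ↦ trigWronskian (P N).eval (Q N).eval w) atTop
      (𝓝 (trigWronskian (seriesSum c) (seriesSum d) w)) := by
  simp only [trigWronskian, Polynomial.deriv, hP.isEntireSeq.deriv_seriesSum,
    hQ.isEntireSeq.deriv_seriesSum]
  exact ((hP.tendsto_eval w).mul (hQ.tendsto_eval w)).add
    ((((hP.tendsto_eval w).mul (hQ.derivative.tendsto_eval w)).sub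
      ((hP.derivative.tendsto_eval w).mul (hQ.tendsto_eval w))).const_mul _)

end DominatedLimit

theorem IsEntireSeq.continuous_trigWronskian {c d : ℕ → ℝ} (hc : IsEntireSeq c)
    (hd : IsEntireSeq d) : Continuous (trigWronskian (seriesSum c) (seriesSum d)) := by
  have hc0 := hc.continuous
  have hd0 := hd.continuous
  have hc1 := hc.derivSeq.continuous
  have hd1 := hd.derivSeq.continuous
  unfold trigWronskian
  rw [hc.deriv_seriesSum, hd.deriv_seriesSum]
  fun_prop

theorem pos_of_mul_le_of_continuousAt {W : ℝ → ℝ} {q r w : ℝ} (hq : 0 < q) (hr : |r| < 1)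
    (hstep : ∀ n : ℕ, q * W (r * (r ^ n * w)) ≤ W (r ^ n * w)) (hcont : ContinuousAt W 0)
    (h0 : 0 < W 0) : 0 < W w := by
  have hlim : Tendsto (fun n : ℕ ↦ r ^ n * w) atTop (𝓝 0) := by
    simpa using (tendsto_pow_atTop_nhds_zero_of_abs_lt_one hr).mul_const w
  obtain ⟨n, hn⟩ := ((hcont.tendsto.comp hlim).eventually (lt_mem_nhds h0)).exists
  have hiter (k : ℕ) : 0 < W (r ^ k * w) → 0 < W w := by
    induction k with
    | zero => simp
    | succ k ih =>
      rw [pow_succ', mul_assoc]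
      exact fun hk ↦ ih ((mul_pos hq hk).trans_le (hstep k))
  exact hiter n hn

variable {q s : ℝ}

theorem trigWronskian_qMLCoeff_pos (hq0 : 0 < q) (hq1 : q < 1) (hs : 0 < s) {w : ℝ} (hw : 0 < w) :
    0 < trigWronskian (seriesSum fun m ↦ (-1) ^ m * qMLCoeff q s q m)
      (seriesSum fun m ↦ (-1) ^ m * qMLCoeff q s (q * q) m) w := by
  have hcos := dominatedLimit_qCosPoly hq0 hq1 hs
  have hsin := dominatedLimit_qSinPoly hq0 hq1 hs
  have hκ : 0 ≤ s / (1 - q) := div_nonneg hs.le (sub_pos.2 hq1).le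
  have hq2 : |q ^ 2| < 1 := by
    rw [abs_of_pos (by positivity)]
    exact pow_lt_one₀ hq0.le hq1 two_ne_zero
  refine pos_of_mul_le_of_continuousAt hq0 hq2 (fun n ↦ ?_)
    (hcos.isEntireSeq.continuous_trigWronskian hsin.isEntireSeq).continuousAt ?_
  · exact le_of_tendsto_of_tendsto' ((hcos.tendsto_trigWronskian hsin _).const_mul q)
      ((hcos.tendsto_trigWronskian hsin _).comp (tendsto_add_atTop_nat 1)) fun N ↦
        mul_trigWronskian_le_trigWronskian_succ hq0.le hq1.le hκ N (by positivity)
  · simp [trigWronskian, seriesSum_zero, qMLCoeff_zero]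

theorem hasSimpleRecipZeros_eulerSeq_qMLCoeff_self (hq0 : 0 < q) (hq1 : q < 1) (hs : 0 < s)
    {τ : ℝ} (hτ : 0 < τ) :
    HasSimpleRecipZeros (eulerSeq τ fun m ↦ (-1) ^ m * qMLCoeff q s q m) := by
  have hκ : 0 ≤ s / (1 - q) := div_nonneg hs.le (sub_pos.2 hq1).le
  have hcos := dominatedLimit_qCosPoly hq0 hq1 hs
  refine hasSimpleRecipZeros_eulerSeq hcos hq0.le hq1
    (posRooted_qCosPoly hq0 hq1.le hκ) (coeff_zero_qCosPoly q _)
    (by simpa using (qMLCoeff_pos hq0 hq1.le hs hq0.le hq1 1).ne') (fun x hx hzero hderiv ↦ ?_) hτ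
  have hwronskian := trigWronskian_qMLCoeff_pos hq0 hq1 hs hx
  rw [← hcos.isEntireSeq.deriv_seriesSum] at hderiv
  simp [trigWronskian, hzero, hderiv] at hwronskian

theorem hasSimpleRecipZeros_eulerSeq_qMLCoeff_self_mul_self (hq0 : 0 < q) (hq1 : q < 1)
    (hs : 0 < s) {τ : ℝ} (hτ : 0 < τ) :
    HasSimpleRecipZeros (eulerSeq τ fun m ↦ (-1) ^ m * qMLCoeff q s (q * q) m) := by
  have hκ : 0 ≤ s / (1 - q) := div_nonneg hs.le (sub_pos.2 hq1).le
  have hqq : q * q < 1 := mul_lt_one_of_nonneg_of_lt_one_left hq0.le hq1 hq1.le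
  have hsin := dominatedLimit_qSinPoly hq0 hq1 hs
  refine hasSimpleRecipZeros_eulerSeq hsin hq0.le hq1
    (posRooted_qSinPoly hq0 hq1.le hκ) (coeff_zero_qSinPoly q _)
    (by simpa using (qMLCoeff_pos hq0 hq1.le hs (by positivity) hqq 1).ne')
    (fun x hx hzero hderiv ↦ ?_) hτ
  have hwronskian := trigWronskian_qMLCoeff_pos hq0 hq1 hs hx
  rw [← hsin.isEntireSeq.deriv_seriesSum] at hderiv
  simp [trigWronskian, hzero, hderiv] at hwronskian

end TrigWronskian

section QGamma

variable {q a x γ σ : ℝ}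

theorem summable_norm_neg_mul_pow (hq0 : 0 ≤ q) (hq1 : q < 1) (a : ℝ) :
    Summable fun k : ℕ ↦ ‖-(a * q ^ k)‖ :=
  ((summable_geometric_of_lt_one hq0 hq1).mul_left a).neg.norm

theorem qPochInf_ne_zero (hq0 : 0 ≤ q) (hq1 : q < 1) (ha0 : 0 ≤ a) (ha1 : a < 1) :
    qPochInf a q ≠ 0 := by
  have hne (k : ℕ) : 1 + -(a * q ^ k) ≠ 0 := by
    rw [← sub_eq_add_neg]
    exact ((sub_pos.2 ha1).trans_le (one_sub_le_one_sub_mul_pow hq0 hq1.le ha0 k)).ne'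
  simpa only [qPochInf, sub_eq_add_neg] using
    tprod_one_add_ne_zero_of_summable hne (summable_norm_neg_mul_pow hq0 hq1 a)

theorem qPoch_mul_qPochInf (hq0 : 0 ≤ q) (hq1 : q < 1) (a : ℝ) (n : ℕ) :
    qPoch a q n * qPochInf (a * q ^ n) q = qPochInf a q := by
  have hshift (k : ℕ) : 1 - a * q ^ n * q ^ k = 1 - a * q ^ (k + n) := by ring
  have hmult := multipliable_one_add_of_summable (summable_norm_neg_mul_pow hq0 hq1 (a * q ^ n))
  simp only [← sub_eq_add_neg, hshift] at hmult
  simp only [qPochInf, qPoch, hshift]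
  exact hmult.prod_mul_tprod_nat_mul' (f := fun k ↦ 1 - a * q ^ k)

theorem qGamma_ne_zero (hq0 : 0 < q) (hq1 : q < 1) (hx : 0 < x) : qGamma q x ≠ 0 :=
  div_ne_zero (mul_ne_zero (qPochInf_ne_zero hq0.le hq1 hq0.le hq1)
      (Real.rpow_pos_of_pos (sub_pos.2 hq1) _).ne')
    (qPochInf_ne_zero hq0.le hq1 (by positivity) (Real.rpow_lt_one hq0.le hq1 hx))

theorem one_sub_pow_mul_qGamma_add_natCast (hq0 : 0 < q) (hq1 : q < 1) (hx : 0 < x) (n : ℕ) :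
    (1 - q) ^ n * qGamma q (x + n) = qPoch (q ^ x) q n * qGamma q x := by
  have hq1' : 0 < 1 - q := sub_pos.2 hq1
  have hpoch := qPoch_mul_qPochInf hq0.le hq1 (q ^ x) n
  have hne := qPochInf_ne_zero hq0.le hq1 (by positivity) (Real.rpow_lt_one hq0.le hq1 hx)
  rw [← hpoch] at hne
  have hpow : (1 - q) ^ (1 - x) = (1 - q) ^ n * (1 - q) ^ (1 - (x + n)) := by
    rw [← Real.rpow_natCast, ← Real.rpow_add hq1']
    ring_nf
  rw [qGamma, qGamma, Real.rpow_add_natCast hq0.ne', ← hpoch, hpow]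
  field_simp [left_ne_zero_of_mul hne, right_ne_zero_of_mul hne]

/-- The coefficients of `Γ_q(γ + 1) λ_{γ,σ}(x; q)` as a power series in `x ^ 2`. -/
noncomputable def qMLSeq (γ σ q : ℝ) (m : ℕ) : ℝ :=
  (-1) ^ m * qMLCoeff q (σ ^ 2 * (1 - q) ^ 2) (q ^ (γ + 1)) m

theorem qMLSeq_eq (hq0 : 0 < q) (hq1 : q < 1) (hγ : -1 < γ) (σ : ℝ) (n : ℕ) :
    qMLSeq γ σ q n = qGamma q (γ + 1) *
      ((-1) ^ n * σ ^ (2 * n) * q ^ (n * (n - 1)) / qGamma q (2 * n + γ + 1)) := by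
  have hγ' : 0 < γ + 1 := by linarith
  have hgamma := one_sub_pow_mul_qGamma_add_natCast hq0 hq1 hγ' (2 * n)
  have hcast : γ + 1 + (2 * n : ℕ) = 2 * n + γ + 1 := by
    push_cast
    ring
  rw [hcast] at hgamma
  have hΓ := qGamma_ne_zero hq0 hq1 (x := 2 * n + γ + 1) (by linarith [n.cast_nonneg (α := ℝ)])
  have hpoch := (qPoch_pos hq0.le hq1.le (by positivity) (Real.rpow_lt_one hq0.le hq1 hγ')
    (2 * n)).ne'
  rw [qMLSeq, qMLCoeff, superGeom, mul_div_assoc', mul_div_assoc', div_eq_div_iff hpoch hΓ,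
    mul_pow, ← pow_mul, ← pow_mul]
  linear_combination (-1) ^ n * σ ^ (2 * n) * q ^ (n * (n - 1)) * hgamma

theorem isEntireSeq_qMLSeq (hq0 : 0 < q) (hq1 : q < 1) (hσ : σ ≠ 0) (hγ : -1 < γ) :
    IsEntireSeq (qMLSeq γ σ q) := by
  have hs : 0 < σ ^ 2 * (1 - q) ^ 2 := mul_pos (by positivity) (pow_pos (sub_pos.2 hq1) 2)
  have ha0 : 0 ≤ q ^ (γ + 1) := by positivity
  have ha1 : q ^ (γ + 1) < 1 := Real.rpow_lt_one hq0.le hq1 (by linarith)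
  refine (isEntireSeq_superGeom (σ ^ 2 * (1 - q) ^ 2 / (1 - q ^ (γ + 1)) ^ 2)
    (by rwa [abs_of_pos hq0])).mono fun m ↦ ?_
  rw [qMLSeq, abs_mul, abs_neg_one_pow, one_mul, abs_of_pos (qMLCoeff_pos hq0 hq1.le hs ha0 ha1 m)]
  exact qMLCoeff_le_superGeom hq0.le hq1.le hs.le ha0 ha1 m

theorem qMLR_eq_seriesSum (hq0 : 0 < q) (hq1 : q < 1) (hγ : -1 < γ) (σ x : ℝ) :
    qMLR γ σ q x = seriesSum (qMLSeq γ σ q) (x ^ 2) / qGamma q (γ + 1) := by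
  have hΓ := qGamma_ne_zero hq0 hq1 (x := γ + 1) (by linarith)
  rw [qMLR, seriesSum, ← tsum_div_const]
  refine tsum_congr fun n ↦ ?_
  rw [qMLSeq_eq hq0 hq1 hγ, pow_mul x, mul_assoc (qGamma q (γ + 1)), mul_div_cancel_left₀ _ hΓ]

theorem hasDerivAt_rpow_mul_qMLR (hq0 : 0 < q) (hq1 : q < 1) (hσ : σ ≠ 0) (hγ : -1 < γ)
    (hx : 0 < x) :
    HasDerivAt (fun x ↦ x ^ (γ + 1) * qMLR γ σ q x)
      ((γ + 1) / qGamma q (γ + 1) * x ^ γ *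
        seriesSum (eulerSeq (2 / (γ + 1)) (qMLSeq γ σ q)) (x ^ 2)) x := by
  have hentire := isEntireSeq_qMLSeq hq0 hq1 hσ hγ
  have hpow : HasDerivAt (fun x : ℝ ↦ x ^ (γ + 1)) ((γ + 1) * x ^ γ) x := by
    simpa using Real.hasDerivAt_rpow_const (p := γ + 1) (Or.inl hx.ne')
  have hsq : HasDerivAt (fun x : ℝ ↦ x ^ 2) (2 * x) x := by simpa using hasDerivAt_pow 2 x
  have hγ' : γ + 1 ≠ 0 := by linarith
  simp only [qMLR_eq_seriesSum hq0 hq1 hγ]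
  refine (hpow.mul (((hentire.hasDerivAt (x ^ 2)).comp x hsq).div_const _)).congr_deriv ?_
  rw [hentire.seriesSum_eulerSeq, Real.rpow_add_one hx.ne']
  simp only [Function.comp_apply]
  field_simp

theorem eulerSeq_qMLSeq_eq (hq0 : 0 < q) (hq1 : q < 1) (hγ : -1 < γ) (σ : ℝ) (n : ℕ) :
    eulerSeq (2 / (γ + 1)) (qMLSeq γ σ q) n =
      (-1) ^ n * σ ^ (2 * n) * q ^ (n * (n - 1)) * (2 * n + γ + 1) * qGamma q (γ + 1) /
        ((γ + 1) * qGamma q (2 * n + γ + 1)) := by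
  have hγ' : γ + 1 ≠ 0 := by linarith
  rw [eulerSeq, qMLSeq_eq hq0 hq1 hγ]
  field_simp
  ring

end QGamma

section Rayleigh

theorem HasSimpleRecipZeros.tsum_inv_sq_and_tsum_inv_pow_four {c ξ : ℕ → ℝ}
    (h : HasSimpleRecipZeros c) (hξ : ξ.Injective) (hpos : ∀ n, 0 < ξ n)
    (hrange : ∀ x, 0 < x → (seriesSum c (x ^ 2) = 0 ↔ x ∈ Set.range ξ)) :
    ∑' n, (ξ n ^ 2)⁻¹ = -c 1 ∧ ∑' n, (ξ n ^ 4)⁻¹ = c 1 ^ 2 - 2 * c 2 := by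
  obtain ⟨u, hu, hinj⟩ := h
  have hsq_inj : Function.Injective fun n ↦ ξ n ^ 2 := fun m n hmn ↦
    hξ ((sq_eq_sq₀ (hpos m).le (hpos n).le).1 hmn)
  have hsq_range (x : ℝ) (hx : 0 < x) :
      seriesSum c x = 0 ↔ x ∈ Set.range fun n ↦ ξ n ^ 2 := by
    rw [← Real.sq_sqrt hx.le, hrange _ (Real.sqrt_pos.2 hx)]
    exact exists_congr fun n ↦ (sq_eq_sq₀ (hpos n).le (Real.sqrt_nonneg x)).symm
  have hsum {p : ℕ} (hp : p ≠ 0) : ∑' n, (ξ n ^ 2)⁻¹ ^ p = ∑' k, u k ^ p :=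
    hu.tsum_inv_pow_eq hinj hsq_inj hsq_range (fun n ↦ pow_pos (hpos n) 2) hp
  constructor
  · simpa [hu.tsum_eq] using hsum one_ne_zero
  · simpa only [inv_pow, ← pow_mul, hu.tsum_sq_eq] using hsum two_ne_zero

variable {q γ σ : ℝ}

theorem hasSimpleRecipZeros_eulerSeq_qMLSeq (hq0 : 0 < q) (hq1 : q < 1) (hσ : σ ≠ 0)
    (hγ : -1 < γ) (h : γ = 0 ∨ γ = 1 ∨ q ≤ 1 / 2) {τ : ℝ} (hτ : 0 < τ) :
    HasSimpleRecipZeros (eulerSeq τ (qMLSeq γ σ q)) := by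
  have hs : 0 < σ ^ 2 * (1 - q) ^ 2 := mul_pos (by positivity) (pow_pos (sub_pos.2 hq1) 2)
  unfold qMLSeq
  rcases h with rfl | rfl | hhalf
  · simpa using hasSimpleRecipZeros_eulerSeq_qMLCoeff_self hq0 hq1 hs hτ
  · have hq2 : q ^ ((1 : ℝ) + 1) = q * q := by rw [Real.rpow_add_one hq0.ne', Real.rpow_one]
    rw [hq2]
    exact hasSimpleRecipZeros_eulerSeq_qMLCoeff_self_mul_self hq0 hq1 hs hτ
  · exact hasSimpleRecipZeros_eulerSeq_qMLCoeff_of_le_half hq0 hhalf hs (by positivity)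
      (Real.rpow_lt_one hq0.le hq1 (by linarith)) hτ

theorem eq_zero_or_eq_one_or_le_half_of_condR (hq0 : 0 < q) (hq1 : q < 1) (hR : condR q γ) :
    γ = 0 ∨ γ = 1 ∨ q ≤ 1 / 2 := by
  rcases hR with (hzero | hone) | ⟨hγ, -, hlt⟩
  · exact .inl hzero
  · exact .inr (.inl hone)
  · have hfactor {x : ℝ} (hx : 0 < x) : 0 ≤ 1 - q ^ x ∧ 1 - q ^ x ≤ 1 :=
      ⟨(sub_pos.2 (Real.rpow_lt_one hq0.le hq1 hx)).le,
        sub_le_self _ (Real.rpow_nonneg hq0.le x)⟩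
    obtain ⟨hnonneg, hle⟩ := hfactor (x := γ + 1) (by linarith [hγ.1])
    have hinv : 0 ≤ q⁻¹ * (1 - q) := mul_nonneg (inv_nonneg.2 hq0.le) (sub_pos.2 hq1).le
    have hlt' : 1 < q⁻¹ * (1 - q) := calc
      1 < q⁻¹ * (1 - q) * (1 - q ^ (γ + 1)) * (1 - q ^ (γ + 2)) := hlt
      _ ≤ q⁻¹ * (1 - q) * (1 - q ^ (γ + 1)) :=
        mul_le_of_le_one_right (mul_nonneg hinv hnonneg) (hfactor (by linarith [hγ.1])).2
      _ ≤ q⁻¹ * (1 - q) := mul_le_of_le_one_right hinv hle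
    rw [inv_mul_eq_div, one_lt_div hq0] at hlt'
    exact .inr (.inr (by linarith))

end Rayleigh

theorem stmt12_general (q σ γ : ℝ) (hq0 : 0 < q) (hq1 : q < 1) (hσ : σ ≠ 0) (hγ : -1 < γ)
    (hγq : γ = 0 ∨ γ = 1 ∨ q ≤ 1 / 2) (ξ : ℕ → ℝ) (hξinj : ξ.Injective) (hξpos : ∀ n, 0 < ξ n)
    (hξzero : ∀ n, deriv (fun x : ℝ ↦ x ^ (γ + 1) * qMLR γ σ q x) (ξ n) = 0)
    (hξall : ∀ x : ℝ, 0 < x →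
      deriv (fun x : ℝ ↦ x ^ (γ + 1) * qMLR γ σ q x) x = 0 → ∃ n, x = ξ n) :
    (∑' n : ℕ, (ξ n ^ 2)⁻¹) =
      σ ^ 2 * (γ + 3) * qGamma q (γ + 1) / ((γ + 1) * qGamma q (γ + 3)) ∧
    (∑' n : ℕ, (ξ n ^ 4)⁻¹) =
      σ ^ 4 * (γ + 3) ^ 2 * qGamma q (γ + 1) ^ 2 /
          ((γ + 1) ^ 2 * qGamma q (γ + 3) ^ 2) -
        2 * σ ^ 4 * q ^ 2 * (γ + 5) * qGamma q (γ + 1) /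
          ((γ + 1) * qGamma q (γ + 5)) := by
  have hγ' : 0 < γ + 1 := by linarith
  have hΓ := qGamma_ne_zero hq0 hq1 hγ'
  have hzero (x : ℝ) (hx : 0 < x) :
      seriesSum (eulerSeq (2 / (γ + 1)) (qMLSeq γ σ q)) (x ^ 2) = 0 ↔ x ∈ Set.range ξ := by
    have hderiv := (hasDerivAt_rpow_mul_qMLR hq0 hq1 hσ hγ hx).deriv
    rw [← mul_eq_zero_iff_left
      (mul_ne_zero (div_ne_zero hγ'.ne' hΓ) (Real.rpow_pos_of_pos hx γ).ne'), ← hderiv]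
    exact ⟨fun h ↦ (hξall x hx h).imp fun n hn ↦ hn.symm, fun ⟨n, hn⟩ ↦ hn ▸ hξzero n⟩
  obtain ⟨hsum2, hsum4⟩ := (hasSimpleRecipZeros_eulerSeq_qMLSeq hq0 hq1 hσ hγ hγq
    (div_pos two_pos hγ')).tsum_inv_sq_and_tsum_inv_pow_four hξinj hξpos hzero
  have hγ3 : 2 * ((1 : ℕ) : ℝ) + γ + 1 = γ + 3 := by push_cast; ring
  have hγ5 : 2 * ((2 : ℕ) : ℝ) + γ + 1 = γ + 5 := by push_cast; ring
  rw [hsum2, hsum4, eulerSeq_qMLSeq_eq hq0 hq1 hγ, eulerSeq_qMLSeq_eq hq0 hq1 hγ, hγ3, hγ5]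
  constructor <;> field_simp <;> ring

end

theorem stmt12 (q σ γ : ℝ) (hq0 : 0 < q) (hq1 : q < 1) (hσ : 0 < σ)
    (hγ0 : 0 ≤ γ) (hγ2 : γ < 2) (hR : condR q γ)
    (ξ : ℕ → ℝ) (hξmono : StrictMono ξ) (hξpos : ∀ n, 0 < ξ n)
    (hξzero : ∀ n, deriv (fun x : ℝ => x ^ (γ + 1) * qMLR γ σ q x) (ξ n) = 0)
    (hξall : ∀ x : ℝ, 0 < x →
      deriv (fun x : ℝ => x ^ (γ + 1) * qMLR γ σ q x) x = 0 → ∃ n, x = ξ n) :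
    (∑' n : ℕ, (ξ n ^ 2)⁻¹) =
      σ ^ 2 * (γ + 3) * qGamma q (γ + 1) / ((γ + 1) * qGamma q (γ + 3)) ∧
    (∑' n : ℕ, (ξ n ^ 4)⁻¹) =
      σ ^ 4 * (γ + 3) ^ 2 * qGamma q (γ + 1) ^ 2 /
          ((γ + 1) ^ 2 * qGamma q (γ + 3) ^ 2) -
        2 * σ ^ 4 * q ^ 2 * (γ + 5) * qGamma q (γ + 1) /
          ((γ + 1) * qGamma q (γ + 5)) :=
  stmt12_general q σ γ hq0 hq1 hσ.ne' (by linarith)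
    (eq_zero_or_eq_one_or_le_half_of_condR hq0 hq1 hR) ξ hξmono.injective hξpos hξzero hξall
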